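/- arXiv:2204.10691 — 7 statements merged into one kernel-verified Lean document; each statement's English description precedes it below -/
import Mathlib

section
/- For every nonempty finite simple graph G, the Cartesian tree product number of G equals the minimum width of a loose tree-decomposition of G; that is, ctp(G) = min{ width(D,G) : D a loose tree-decomposition of G }. -/
/-!
Both inequalities preserve the number `k` of layers of `T □ K_k`, respectively the bag size; every
tree is rooted, so that it is described by a parent function and a depth (`IsRooted`).

Given a loose tree-decomposition with bags of size at most `k`, the vertices of each bag are
assigned distinct slots in `Fin k`, from the root downwards: a vertex shared with the parent bag
keeps its slot, and the new end of the marginal edge, if there is one, takes over the slot of the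
old end. Since there is at most one marginal edge per tree-edge, this never leads to a conflict
(`exists_next_slots`). Placing the trace of each vertex at its slot gives a minor model in the same
`T □ K_k`: an edge inside a bag is realised in a copy of `K_k`, and a marginal edge in a copy of
`T` (`IsLTD.isMinor`).

Conversely, given a minor model `ρ` in `T □ K_k`, let the bag of `t` consist of the vertices whose
branch set meets the fibre over `t`. The branch sets are disjoint, so this bag has size at most `k`,
but up to `k` edges may be marginal at one tree-edge. So each edge from `t` to its parent is
subdivided into a path along which the slots are switched from `t` to the parent one at a time;
then a marginal edge has to join the old and the new occupant of the switched slot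
(`IsMinor.exists_isLTD`). Traces stay connected because a branch set that occurs at `t` and is not
rooted there uses the edge from `t` to its parent within one slot (`IsRooted.exists_layer`), so it
occurs along the whole path.
-/

open SimpleGraph

/-- A set of vertices is connected in `G` if the induced subgraph is connected. -/
def ConnectedIn {α : Type} (G : SimpleGraph α) (s : Set α) : Prop :=
  (G.induce s).Connected

/-- `H` is a minor of `G`: there is a minor model of `H` in `G`. -/
def IsMinor {W V : Type} (H : SimpleGraph W) (G : SimpleGraph V) : Prop :=
  ∃ ρ : W → Set V,
    (∀ x, (ρ x).Nonempty) ∧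
    (∀ x, ConnectedIn G (ρ x)) ∧
    (∀ x y, x ≠ y → Disjoint (ρ x) (ρ y)) ∧
    (∀ x y, H.Adj x y → ∃ a ∈ ρ x, ∃ b ∈ ρ y, G.Adj a b)

/-- Cartesian tree product number: least `k ≥ 1` such that `G` is a minor
of `T □ K_k` for some finite tree `T`. -/
noncomputable def ctp {V : Type} (G : SimpleGraph V) : ℕ :=
  sInf {k | 1 ≤ k ∧ ∃ (τ : Type) (T : SimpleGraph τ), Finite τ ∧ T.IsTree ∧
    IsMinor G (T.boxProd (⊤ : SimpleGraph (Fin k)))}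

/-- Edges of `G[A ∪ B]` that are edges of neither `G[A]` nor `G[B]` (marginal edges). -/
def marginalEdges {V : Type} (G : SimpleGraph V) (A B : Set V) : Set (Sym2 V) :=
  {e | ∃ x y, e = s(x, y) ∧ G.Adj x y ∧ (x ∈ A ∪ B) ∧ (y ∈ A ∪ B) ∧
    ¬(x ∈ A ∧ y ∈ A) ∧ ¬(x ∈ B ∧ y ∈ B)}

/-- `(T, χ)` is a loose tree-decomposition of `G`. -/
def IsLTD {V τ : Type} (G : SimpleGraph V) (T : SimpleGraph τ) (χ : τ → Set V) : Prop :=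
  Finite τ ∧ T.IsTree ∧
  (∀ x : V, {t | x ∈ χ t}.Nonempty ∧ ConnectedIn T {t | x ∈ χ t}) ∧
  (∀ x y : V, G.Adj x y → ∃ t1 t2 : τ, T.Adj t1 t2 ∧ x ∈ χ t1 ∪ χ t2 ∧ y ∈ χ t1 ∪ χ t2) ∧
  (∀ t1 t2 : τ, T.Adj t1 t2 → (marginalEdges G (χ t1) (χ t2)).Subsingleton)

/-- The width of a loose tree-decomposition: the maximum size of a bag. -/
noncomputable def ltdWidth {V τ : Type} (χ : τ → Set V) : ℕ :=
  sSup (Set.range fun t => (χ t).ncard)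

/-- A full loose tree-decomposition of width `k`. -/
def IsFullLTD {V τ : Type} (G : SimpleGraph V) (T : SimpleGraph τ) (χ : τ → Set V)
    (k : ℕ) : Prop :=
  IsLTD G T χ ∧ (∀ t, (χ t).ncard = k) ∧
  ∀ t t', T.Adj t t' → ∃ x x', x ∈ χ t \ χ t' ∧ x' ∈ χ t' \ χ t ∧
    symmDiff (χ t) (χ t') = {x, x'}

/-- Number of connected components of a graph. -/
noncomputable def numComponents {α : Type} (G : SimpleGraph α) : ℕ :=
  Nat.card G.ConnectedComponent

/-- `S` is a separator of `G`: `G - S` has strictly more connected components than `G`. -/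
def IsSeparator {V : Type} (G : SimpleGraph V) (S : Set V) : Prop :=
  numComponents G < numComponents (G.induce (Sᶜ))

/-- Two vertex sets are (tightly) touching. -/
def Touching {V : Type} (G : SimpleGraph V) (S1 S2 : Set V) : Prop :=
  (S1 ∩ S2).Nonempty ∨
  ∃ x1 x2 y1 y2, G.Adj x1 x2 ∧ G.Adj y1 y2 ∧ s(x1, x2) ≠ s(y1, y2) ∧
    x1 ∈ S1 ∧ y1 ∈ S1 ∧ x2 ∈ S2 ∧ y2 ∈ S2

/-- A tight bramble of `G`. -/
def TightBramble {V : Type} (G : SimpleGraph V) (B : Set (Set V)) : Prop :=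
  (∀ S ∈ B, ConnectedIn G S) ∧ (∀ S ∈ B, 2 ≤ S.ncard) ∧ B.Pairwise (Touching G)

/-- `S` is a cover of the family `B`. -/
def IsCover {V : Type} (B : Set (Set V)) (S : Set V) : Prop :=
  ∀ B0 ∈ B, (S ∩ B0).Nonempty

/-- The order of a family `B`: the minimum size of a cover of `B`. -/
noncomputable def brambleOrder {V : Type} (B : Set (Set V)) : ℕ :=
  sInf {n | ∃ S : Set V, IsCover B S ∧ S.ncard = n}

/-! ### Rooted trees -/

/-- `T` is the tree with root `r` in which `par v` is the parent of `v ≠ r` and `d v` is the depth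
of `v`. By convention the root is its own parent. -/
structure IsRooted {τ : Type} (T : SimpleGraph τ) (r : τ) (par : τ → τ) (d : τ → ℕ) : Prop where
  par_root : par r = r
  depth_root : d r = 0
  depth_par : ∀ v, v ≠ r → d v = d (par v) + 1
  adj_iff : ∀ u v, T.Adj u v ↔ (u ≠ r ∧ par u = v) ∨ (v ≠ r ∧ par v = u)

/-- The parent of `v` is the second vertex of the unique path from `v` to the root. -/
lemma exists_isRooted {τ : Type} {T : SimpleGraph τ} (hT : T.IsTree) (r : τ) :
    ∃ par d, IsRooted T r par d := by
  choose p hp hu using fun v => hT.existsUnique_path v r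
  have hnil : ∀ v, v ≠ r → ¬ (p v).Nil := fun v hv => Walk.not_nil_of_ne hv
  have hr : p r = Walk.nil := ((hu r) _ Walk.IsPath.nil).symm
  refine ⟨fun v => (p v).snd, fun v => (p v).length, ?_, ?_, ?_, ?_⟩
  · simp [hr]
  · simp [hr]
  · intro v hv
    rw [← hu _ (p v).tail (hp v).tail, Walk.length_tail_add_one (hnil v hv)]
  · intro u v
    constructor
    · intro h
      by_cases hv : v ∈ (p u).support
      · left
        refine ⟨?_, (hT.isAcyclic.eq_snd_of_adj_start (hp u) h hv).symm⟩
        rintro rfl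
        rw [hr] at hv
        simp only [Walk.support_nil, List.mem_singleton] at hv
        exact h.ne hv.symm
      · right
        have hpv := hu v (Walk.cons h.symm (p u)) ((hp u).cons hv)
        refine ⟨?_, ?_⟩
        · rintro rfl
          exact hv (Walk.end_mem_support _)
        · rw [← hpv]; simp
    · rintro (⟨h, rfl⟩ | ⟨h, rfl⟩)
      · exact Walk.adj_snd (hnil u h)
      · exact (Walk.adj_snd (hnil v h)).symm

lemma IsRooted.adj_par {τ : Type} {T : SimpleGraph τ} {r : τ} {par : τ → τ} {d : τ → ℕ}
    (h : IsRooted T r par d) {v : τ} (hv : v ≠ r) : T.Adj v (par v) :=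
  (h.adj_iff _ _).2 (Or.inl ⟨hv, rfl⟩)

/-- Connectivity follows by climbing to the root, and acyclicity because the edges correspond to
the non-root vertices, so that there is one edge fewer than there are vertices. -/
lemma IsRooted.isTree {τ : Type} [Finite τ] {T : SimpleGraph τ} {r : τ} {par : τ → τ}
    {d : τ → ℕ} (h : IsRooted T r par d) : T.IsTree := by
  rw [isTree_iff_connected_and_card]
  constructor
  · rw [connected_iff_exists_forall_reachable]
    refine ⟨r, ?_⟩
    suffices ∀ n v, d v = n → T.Reachable r v from fun v => this _ v rfl
    intro n
    induction n using Nat.strong_induction_on with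
    | _ n ih =>
      intro v hv
      by_cases hvr : v = r
      · rw [hvr]
      · have hd := h.depth_par v hvr
        exact (ih (d (par v)) (by omega) _ rfl).trans (h.adj_par hvr).symm.reachable
  · have hb : Function.Bijective
        (fun v : {v // v ≠ r} => (⟨s(v.1, par v.1), h.adj_par v.2⟩ : T.edgeSet)) := by
      constructor
      · rintro ⟨v, hv⟩ ⟨w, hw⟩ hvw
        have hvw' : s(v, par v) = s(w, par w) := congrArg Subtype.val hvw
        rw [Sym2.eq_iff] at hvw'
        rcases hvw' with ⟨h1, -⟩ | ⟨h1, h2⟩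
        · exact Subtype.ext h1
        · have e1 := h.depth_par v hv
          have e2 := h.depth_par w hw
          rw [h2] at e1
          rw [← h1] at e2
          omega
      · rintro ⟨e, he⟩
        induction e using Sym2.ind with
        | _ u v =>
          rcases (h.adj_iff u v).1 he with ⟨hu, rfl⟩ | ⟨hv, rfl⟩
          · exact ⟨⟨u, hu⟩, rfl⟩
          · exact ⟨⟨v, hv⟩, Subtype.ext Sym2.eq_swap⟩
    rw [← Nat.card_congr (Equiv.ofBijective _ hb)]
    have := Fintype.ofFinite τ
    classical
    have : 0 < Fintype.card τ := Fintype.card_pos_iff.2 ⟨r⟩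
    simp only [Nat.card_eq_fintype_card, Fintype.card_subtype_compl, Fintype.card_unique, ne_eq]
    omega

lemma exists_rootedGraph {τ : Type} (r : τ) (par : τ → τ) (d : τ → ℕ) (hr : par r = r)
    (hd : d r = 0) (hp : ∀ v, v ≠ r → d v = d (par v) + 1) :
    ∃ T : SimpleGraph τ, IsRooted T r par d := by
  refine ⟨{ Adj := fun u v => (u ≠ r ∧ par u = v) ∨ (v ≠ r ∧ par v = u)
            symm := ⟨fun u v h => h.symm⟩
            loopless := ⟨?_⟩ }, hr, hd, hp, fun _ _ => Iff.rfl⟩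
  rintro v (⟨h1, h2⟩ | ⟨h1, h2⟩)
  all_goals
    have := hp v h1
    rw [h2] at this
    omega

/-- Top-down recursion along a rooted tree. -/
lemma IsRooted.exists_rec {τ X : Type} {T : SimpleGraph τ} {r : τ} {par : τ → τ} {d : τ → ℕ}
    (h : IsRooted T r par d) (x₀ : X) (step : τ → X → X) :
    ∃ c : τ → X, c r = x₀ ∧ ∀ v, v ≠ r → c v = step v (c (par v)) := by
  let F : ℕ → τ → X := fun n => Nat.rec (fun _ => x₀) (fun _ c v => step v (c (par v))) n
  refine ⟨fun v => F (d v) v, ?_, fun v hv => ?_⟩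
  · simp only [h.depth_root]; rfl
  · simp only [h.depth_par v hv]; rfl

/-- A set is connected as soon as every vertex other than `s` has a neighbour in the set that is
closer to `s`, as measured by `m`. -/
lemma connectedIn_of_descent {τ : Type} {T : SimpleGraph τ} {S : Set τ} {s : τ} (hs : s ∈ S)
    (m : τ → ℕ) (hm : ∀ v ∈ S, v ≠ s → ∃ w ∈ S, T.Adj v w ∧ m w < m v) : ConnectedIn T S := by
  rw [ConnectedIn, connected_iff_exists_forall_reachable]
  refine ⟨⟨s, hs⟩, ?_⟩
  suffices ∀ n (v : S), m v = n → (T.induce S).Reachable ⟨s, hs⟩ v from fun v => this _ v rfl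
  intro n
  induction n using Nat.strong_induction_on with
  | _ n ih =>
    rintro ⟨v, hv⟩ hn
    by_cases hvs : v = s
    · subst hvs; exact Reachable.refl _
    · obtain ⟨w, hw, hadj, hlt⟩ := hm v hv hvs
      refine (ih (m w) (by simpa [← hn] using hlt) ⟨w, hw⟩ rfl).trans (Adj.reachable ?_)
      simpa using hadj.symm

/-! ### From a loose tree-decomposition to a minor model -/

lemma exists_injOn_extend {V : Type} [Finite V] {k : ℕ} {S B : Set V} (hSB : S ⊆ B)
    (hB : B.ncard ≤ k) (h : V → Fin k) (hS : S.InjOn h) :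
    ∃ g : V → Fin k, B.InjOn g ∧ S.EqOn g h := by
  classical
  rcases isEmpty_or_nonempty V with hV | ⟨⟨v₀⟩⟩
  · exact ⟨h, fun x => isEmptyElim x, fun x => isEmptyElim x⟩
  have : Nonempty (Fin k) := ⟨h v₀⟩
  have hle : (B \ S).encard ≤ ((h '' S)ᶜ).encard := by
    rw [← (Set.toFinite _).cast_ncard_eq, ← (Set.toFinite _).cast_ncard_eq, Nat.cast_le,
      Set.ncard_sdiff hSB, Set.ncard_compl, hS.ncard_image, Nat.card_fin]
    omega
  obtain ⟨f, hf, hinj⟩ := (Set.toFinite (B \ S)).exists_injOn_of_encard_le hle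
  have hf' : ∀ x ∈ B, x ∉ S → ∀ y ∈ S, f x ≠ h y := fun x hx hxS y hy e =>
    hf ⟨hx, hxS⟩ ⟨y, hy, e.symm⟩
  refine ⟨fun x => if x ∈ S then h x else f x, ?_, fun x hx => by simp [hx]⟩
  intro x hx y hy hxy
  by_cases hxS : x ∈ S <;> by_cases hyS : y ∈ S <;> simp only [hxS, hyS, if_true, if_false] at hxy
  · exact hS hxS hyS hxy
  · exact absurd hxy.symm (hf' y hy hyS x hxS)
  · exact absurd hxy (hf' x hx hxS y hyS)
  · exact hinj ⟨hx, hxS⟩ ⟨hy, hyS⟩ hxy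

/-- Slots pass from a bag `A` to a neighbouring bag `B`: common vertices keep their slot, and the
`B`-end of the marginal edge, if there is one, takes over the slot of its `A`-end. As there is at
most one marginal edge, this prescribes an injective assignment on a subset of `B`, which extends
to all of `B`. -/
lemma exists_next_slots {V : Type} [Finite V] (G : SimpleGraph V) {k : ℕ} {A B : Set V}
    (hB : B.ncard ≤ k) (hm : (marginalEdges G A B).Subsingleton) (f : V → Fin k)
    (hf : A.InjOn f) :
    ∃ g : V → Fin k, B.InjOn g ∧ (∀ x ∈ A, x ∈ B → g x = f x) ∧
      ∀ x y, G.Adj x y → x ∈ A → x ∉ B → y ∈ B → y ∉ A → f x = g y := by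
  classical
  by_cases hex : ∃ x y, G.Adj x y ∧ x ∈ A ∧ x ∉ B ∧ y ∈ B ∧ y ∉ A
  · obtain ⟨x, y, hxy, hxA, hxB, hyB, hyA⟩ := hex
    have hSB : insert y (A ∩ B) ⊆ B := Set.insert_subset hyB Set.inter_subset_right
    obtain ⟨g, hg, hgS⟩ := exists_injOn_extend hSB hB (Function.update f y (f x)) (by
      have hne : ∀ z ∈ A ∩ B, z ≠ y := fun z hz e => hyA (e ▸ hz.1)
      rw [Set.injOn_insert (fun h => hyA h.1)]
      constructor
      · intro z hz w hw hzw
        rw [Function.update_of_ne (hne z hz), Function.update_of_ne (hne w hw)] at hzw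
        exact hf hz.1 hw.1 hzw
      · rintro ⟨z, hz, hzy⟩
        rw [Function.update_of_ne (hne z hz), Function.update_self] at hzy
        exact hxB (hf hz.1 hxA hzy ▸ hz.2))
    refine ⟨g, hg, fun z hzA hzB => ?_, fun x' y' hxy' hxA' hxB' hyB' hyA' => ?_⟩
    · rw [hgS (Or.inr ⟨hzA, hzB⟩), Function.update_of_ne]
      rintro rfl
      exact hyA hzA
    · have he : s(x', y') = s(x, y) := hm
        ⟨x', y', rfl, hxy', Or.inl hxA', Or.inr hyB', fun h => hyA' h.2, fun h => hxB' h.1⟩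
        ⟨x, y, rfl, hxy, Or.inl hxA, Or.inr hyB, fun h => hyA h.2, fun h => hxB h.1⟩
      rw [Sym2.eq_iff] at he
      rcases he with ⟨rfl, rfl⟩ | ⟨rfl, rfl⟩
      · rw [hgS (Or.inl rfl), Function.update_self]
      · exact absurd hxA' hyA
  · obtain ⟨g, hg, hgS⟩ := exists_injOn_extend (S := A ∩ B) Set.inter_subset_right hB f
      (hf.mono Set.inter_subset_left)
    exact ⟨g, hg, fun z hzA hzB => hgS ⟨hzA, hzB⟩, fun x y h1 h2 h3 h4 h5 =>
      absurd ⟨x, y, h1, h2, h3, h4, h5⟩ hex⟩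

/-- Assign to the vertices of each bag distinct slots in `Fin k`, passing them top-down along the
tree by `exists_next_slots`. A vertex then keeps the same slot along its trace, and its branch set
is its trace placed at that slot. -/
lemma IsLTD.isMinor {V τ : Type} [Finite V] [Nonempty V] {G : SimpleGraph V} {T : SimpleGraph τ}
    {χ : τ → Set V} (h : IsLTD G T χ) {k : ℕ} (hk : ∀ t, (χ t).ncard ≤ k) :
    1 ≤ k ∧ IsMinor G (T.boxProd (⊤ : SimpleGraph (Fin k))) := by
  obtain ⟨-, hT, htr, hE, hM⟩ := h
  have hk1 : 1 ≤ k := by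
    obtain ⟨x⟩ := ‹Nonempty V›
    obtain ⟨t, ht⟩ := (htr x).1
    exact ((Set.ncard_pos (Set.toFinite _)).2 ⟨x, ht⟩).trans_le (hk t)
  refine ⟨hk1, ?_⟩
  obtain ⟨r⟩ := hT.connected.nonempty
  obtain ⟨par, d, hR⟩ := exists_isRooted hT r
  have hstep : ∀ (v : τ) (f : V → Fin k), ∃ g : V → Fin k, v ≠ r → (χ (par v)).InjOn f →
      (χ v).InjOn g ∧ (∀ x ∈ χ (par v), x ∈ χ v → g x = f x) ∧
      ∀ x y, G.Adj x y → x ∈ χ (par v) → x ∉ χ v → y ∈ χ v → y ∉ χ (par v) → f x = g y := by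
    intro v f
    by_cases hc : v ≠ r ∧ (χ (par v)).InjOn f
    · obtain ⟨g, hg⟩ := exists_next_slots G (hk v) (hM _ _ (hR.adj_par hc.1).symm) f hc.2
      exact ⟨g, fun _ _ => hg⟩
    · exact ⟨f, fun h1 h2 => absurd ⟨h1, h2⟩ hc⟩
  choose step hstep using hstep
  obtain ⟨f₀, hf₀, -⟩ := exists_injOn_extend (Set.empty_subset _) (hk r)
    (fun _ => ⟨0, hk1⟩) (Set.injOn_empty _)
  obtain ⟨c, hcr, hc⟩ := hR.exists_rec f₀ step
  have hinj : ∀ n v, d v = n → (χ v).InjOn (c v) := by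
    intro n
    induction n with
    | zero =>
      intro v hv
      by_cases hvr : v = r
      · rw [hvr, hcr]; exact hf₀
      · have := hR.depth_par v hvr
        omega
    | succ n ih =>
      intro v hv
      have hvr : v ≠ r := by
        rintro rfl
        rw [hR.depth_root] at hv
        omega
      have := hR.depth_par v hvr
      rw [hc v hvr]
      exact (hstep v _ hvr (ih _ (by omega))).1
  replace hinj := fun v => hinj _ v rfl
  have hpar := fun v (hv : v ≠ r) => hc v hv ▸ (hstep v _ hv (hinj (par v))).2
  have hsame : ∀ u v, T.Adj u v → ∀ x ∈ χ u, x ∈ χ v → c u x = c v x := by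
    intro u v huv x hxu hxv
    rcases (hR.adj_iff u v).1 huv with ⟨hu, rfl⟩ | ⟨hv, rfl⟩
    · exact (hpar u hu).1 x hxv hxu
    · exact ((hpar v hv).1 x hxu hxv).symm
  have hmarg : ∀ u v, T.Adj u v → ∀ x y, G.Adj x y → x ∈ χ u → x ∉ χ v → y ∈ χ v → y ∉ χ u →
      c u x = c v y := by
    intro u v huv x y hxy h1 h2 h3 h4
    rcases (hR.adj_iff u v).1 huv with ⟨hu, rfl⟩ | ⟨hv, rfl⟩
    · exact ((hpar u hu).2 y x hxy.symm h3 h4 h1 h2).symm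
    · exact (hpar v hv).2 x y hxy h1 h2 h3 h4
  refine ⟨fun x => {p | x ∈ χ p.1 ∧ p.2 = c p.1 x}, fun x => ?_, fun x => ?_, fun x y hxy => ?_,
    fun x y hxy => ?_⟩
  · obtain ⟨t, ht⟩ := (htr x).1
    exact ⟨(t, c t x), ht, rfl⟩
  · refine (htr x).2.map (H := (T.boxProd (⊤ : SimpleGraph (Fin k))).induce _)
      ⟨fun t => ⟨(t.1, c t.1 x), t.2, rfl⟩, ?_⟩ ?_
    · rintro ⟨a, ha⟩ ⟨b, hb⟩ hab
      have hab' : T.Adj a b := hab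
      simp only [comap_adj, Function.Embedding.subtype_apply, boxProd_adj]
      exact Or.inl ⟨hab', hsame a b hab' x ha hb⟩
    · rintro ⟨⟨t, i⟩, ht, hi⟩
      exact ⟨⟨t, ht⟩, Subtype.ext (Prod.ext rfl hi.symm)⟩
  · rw [Set.disjoint_left]
    rintro ⟨t, i⟩ ⟨h1, h2⟩ ⟨h3, h4⟩
    exact hxy (hinj t h1 h3 (h2.symm.trans h4))
  · have hbag : ∀ t, x ∈ χ t → y ∈ χ t → ∃ a ∈ {p : τ × Fin k | x ∈ χ p.1 ∧ p.2 = c p.1 x},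
        ∃ b ∈ {p : τ × Fin k | y ∈ χ p.1 ∧ p.2 = c p.1 y},
        (T.boxProd (⊤ : SimpleGraph (Fin k))).Adj a b := by
      intro t hx hy
      refine ⟨(t, c t x), ⟨hx, rfl⟩, (t, c t y), ⟨hy, rfl⟩, ?_⟩
      rw [boxProd_adj]
      exact Or.inr ⟨fun e => hxy.ne (hinj t hx hy e), rfl⟩
    obtain ⟨t, u, htu, hx, hy⟩ := hE x y hxy
    by_cases h1 : x ∈ χ t ∧ y ∈ χ t
    · exact hbag t h1.1 h1.2
    by_cases h2 : x ∈ χ u ∧ y ∈ χ u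
    · exact hbag u h2.1 h2.2
    simp only [Set.mem_union] at hx hy
    by_cases hxt : x ∈ χ t
    · refine ⟨(t, c t x), ⟨hxt, rfl⟩, (u, c u y), ⟨by tauto, rfl⟩, ?_⟩
      rw [boxProd_adj]
      exact Or.inl ⟨htu, hmarg t u htu x y hxy hxt (by tauto) (by tauto) (by tauto)⟩
    · refine ⟨(u, c u x), ⟨by tauto, rfl⟩, (t, c t y), ⟨by tauto, rfl⟩, ?_⟩
      rw [boxProd_adj]
      exact Or.inl ⟨htu.symm, hmarg u t htu.symm x y hxy (by tauto) hxt (by tauto) (by tauto)⟩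

/-! ### From a minor model to a loose tree-decomposition -/

/-- A branch set that meets the fibres over `v` and over another vertex `s` no deeper than `v` uses
the edge from `v` to its parent in one of the layers: it has to leave the subtree below `v`. -/
lemma IsRooted.exists_layer {τ κ : Type} {T : SimpleGraph τ} {r : τ} {par : τ → τ} {d : τ → ℕ}
    (h : IsRooted T r par d) {H : SimpleGraph κ} {R : Set (τ × κ)}
    (hR : ConnectedIn (T.boxProd H) R) {s v : τ} {l i : κ} (hs : (s, l) ∈ R) (hv : (v, i) ∈ R)
    (hd : d s ≤ d v) (hne : v ≠ s) : v ≠ r ∧ ∃ j, (v, j) ∈ R ∧ (par v, j) ∈ R := by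
  have hle : ∀ u, d (par u) ≤ d u := fun u => by
    by_cases hu : u = r
    · rw [hu, h.par_root]
    · have := h.depth_par u hu
      omega
  have hle' : ∀ n u, d (par^[n] u) ≤ d u := by
    intro n
    induction n with
    | zero => intro u; exact le_rfl
    | succ n ih => intro u; exact (ih (par u)).trans (hle u)
  obtain ⟨p⟩ := hR.preconnected ⟨(v, i), hv⟩ ⟨(s, l), hs⟩
  obtain ⟨⟨⟨⟨⟨u, a⟩, hu⟩, ⟨⟨w, b⟩, hw⟩⟩, hadj⟩, -, hin, hout⟩ :=
    p.exists_boundary_dart {q | ∃ n : ℕ, par^[n] q.1.1 = v} ⟨0, rfl⟩ (by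
      rintro ⟨n, hn⟩
      dsimp only at hn
      cases n with
      | zero => exact hne hn.symm
      | succ n =>
        by_cases hsr : s = r
        · rw [hsr, Function.iterate_fixed h.par_root] at hn
          exact hne (hsr ▸ hn.symm)
        · have h1 := h.depth_par s hsr
          have h2 := hle' n (par s)
          rw [Function.iterate_succ_apply] at hn
          rw [hn] at h2
          omega)
  obtain ⟨n, hn⟩ := hin
  simp only [comap_adj, Function.Embedding.subtype_apply, boxProd_adj] at hadj hn
  rcases hadj with ⟨huw, rfl⟩ | ⟨-, rfl⟩
  · rcases (h.adj_iff u w).1 huw with ⟨hur, rfl⟩ | ⟨-, rfl⟩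
    · cases n with
      | zero =>
        obtain rfl : u = v := hn
        exact ⟨hur, a, hu, hw⟩
      | succ n => exact absurd ⟨n, hn⟩ hout
    · exact absurd ⟨n + 1, hn⟩ hout
  · exact absurd ⟨n, hn⟩ hout

/-- The bag at the `j`-th point of the path from `t` to its parent: the vertices whose branch set
occupies one of the first `j` slots over the parent or one of the remaining slots over `t`. -/
def pathBag {V τ : Type} {k : ℕ} (par : τ → τ) (ρ : V → Set (τ × Fin k)) (p : τ × Fin (k + 1)) :
    Set V :=
  {x | ∃ i : Fin k, (if i.val < p.2.val then par p.1 else p.1, i) ∈ ρ x}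

open Classical in
/-- The parent function of the subdivided tree: every `t` starts a path
`(t, 0), …, (t, k)`, whose last point hangs below `(par t, 0)`. The root is `(r, k)`. -/
noncomputable def pathPar {τ : Type} (r : τ) (par : τ → τ) (k : ℕ) (p : τ × Fin (k + 1)) :
    τ × Fin (k + 1) :=
  if h : p.2.val < k then (p.1, ⟨p.2.val + 1, by omega⟩)
  else if p.1 = r then p else (par p.1, 0)

lemma pathPar_of_lt {τ : Type} (r : τ) (par : τ → τ) {k j : ℕ} (t : τ) (hj : j < k) :
    pathPar r par k (t, ⟨j, by omega⟩) = (t, ⟨j + 1, by omega⟩) := by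
  simp [pathPar, hj]

lemma pathPar_last {τ : Type} {r : τ} (par : τ → τ) (k : ℕ) {t : τ} (ht : t ≠ r) :
    pathPar r par k (t, ⟨k, by omega⟩) = (par t, 0) := by
  simp [pathPar, ht]

lemma IsRooted.exists_subdivision {τ : Type} {T : SimpleGraph τ} {r : τ} {par : τ → τ} {d : τ → ℕ}
    (h : IsRooted T r par d) (k : ℕ) :
    ∃ T' : SimpleGraph (τ × Fin (k + 1)), IsRooted T' (r, ⟨k, by omega⟩) (pathPar r par k)
      (fun p => d p.1 * (k + 1) + (k - p.2.val)) := by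
  apply exists_rootedGraph
  · simp [pathPar]
  · simp [h.depth_root]
  · rintro ⟨t, j, hj⟩ hne
    by_cases hjk : j < k
    · rw [pathPar_of_lt r par t hjk]
      dsimp only
      omega
    · obtain rfl : j = k := by omega
      have ht : t ≠ r := by rintro rfl; exact hne rfl
      rw [pathPar_last par j ht]
      simp only [h.depth_par t ht, Fin.val_zero]
      ring_nf
      omega

/-- The tree is subdivided so that consecutive bags differ in a single slot. -/
lemma IsMinor.exists_isLTD {V τ : Type} [Finite V] {G : SimpleGraph V} {T : SimpleGraph τ}
    [Finite τ] (hT : T.IsTree) {k : ℕ} (hk : 1 ≤ k)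
    (hG : IsMinor G (T.boxProd (⊤ : SimpleGraph (Fin k)))) :
    ∃ (τ' : Type) (T' : SimpleGraph τ') (χ : τ' → Set V), IsLTD G T' χ ∧ ltdWidth χ ≤ k := by
  obtain ⟨ρ, hne, hconn, hdisj, hedge⟩ := hG
  have huniq : ∀ p x y, p ∈ ρ x → p ∈ ρ y → x = y := fun p x y hx hy =>
    by_contra fun hxy => Set.disjoint_left.1 (hdisj x y hxy) hx hy
  obtain ⟨r⟩ := hT.connected.nonempty
  obtain ⟨par, d, hR⟩ := exists_isRooted hT r
  obtain ⟨T', hR'⟩ := hR.exists_subdivision k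
  have hlast : ∀ t, t ≠ r → pathBag par ρ (t, ⟨k, by omega⟩) = pathBag par ρ (par t, 0) := by
    intro t ht
    ext x
    simp [pathBag]
  have hadj : ∀ t j (hj : j < k), T'.Adj (t, ⟨j, by omega⟩) (t, ⟨j + 1, by omega⟩) := by
    intro t j hj
    rw [← pathPar_of_lt r par t hj]
    refine hR'.adj_par fun e => ?_
    simp only [Prod.mk.injEq, Fin.mk.injEq] at e
    omega
  have hadj_last : ∀ t, t ≠ r → T'.Adj (t, ⟨k, by omega⟩) (par t, 0) := by
    intro t ht
    rw [← pathPar_last par k ht]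
    exact hR'.adj_par fun e => ht (congrArg Prod.fst e)
  refine ⟨_, T', pathBag par ρ, ⟨inferInstance, hR'.isTree, ?_, ?_, ?_⟩, ?_⟩
  · intro x
    obtain ⟨⟨t₀, i₀⟩, ht₀⟩ := hne x
    -- The shallowest vertex `s` of the projection of the branch set.
    obtain ⟨s, ⟨l, hl⟩, hmin⟩ := Set.exists_min_image {t | ∃ i, (t, i) ∈ ρ x} d (Set.toFinite _)
      ⟨t₀, i₀, ht₀⟩
    have hs0 : x ∈ pathBag par ρ (s, 0) := ⟨l, by simpa using hl⟩
    refine ⟨⟨(s, 0), hs0⟩, ?_⟩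
    classical
    -- Points on the path of `s` descend to `(s, 0)`; all other points climb towards it.
    refine connectedIn_of_descent (s := (s, (0 : Fin (k + 1)))) hs0
      (fun p => if p.1 = s then p.2.val else k + 1 + (d p.1 * (k + 1) + (k - p.2.val))) ?_
    rintro ⟨t, j, hj⟩ ⟨i, hi⟩ hts
    dsimp only at hi
    by_cases hteq : t = s
    · subst hteq
      obtain ⟨j, rfl⟩ : ∃ j', j = j' + 1 := Nat.exists_eq_succ_of_ne_zero (by
        rintro rfl; exact hts rfl)
      refine ⟨(t, ⟨j, by omega⟩), ?_, (hadj t j (by omega)).symm, by simp⟩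
      by_cases hij : i.val < j + 1
      · rw [if_pos hij] at hi
        have htr : t = r := by
          by_contra htr
          have h1 := hmin (par t) ⟨i, hi⟩
          have h2 := hR.depth_par t htr
          omega
        refine ⟨i, ?_⟩
        rw [htr, hR.par_root] at hi ⊢
        simpa using hi
      · rw [if_neg hij] at hi
        exact ⟨i, by rwa [if_neg (by dsimp only; omega)]⟩
    · have key : t ≠ r ∧ ∃ i : Fin k, (par t, i) ∈ ρ x ∧ (i.val < j ∨ (t, i) ∈ ρ x) := by
        by_cases ht : ∃ i, (t, i) ∈ ρ x
        · obtain ⟨i', hi'⟩ := ht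
          obtain ⟨h1, i'', h2, h3⟩ :=
            hR.exists_layer (hconn x) hl hi' (hmin t ⟨i', hi'⟩) hteq
          exact ⟨h1, i'', h3, Or.inr h2⟩
        · by_cases hij : i.val < j
          · rw [if_pos hij] at hi
            refine ⟨?_, i, hi, Or.inl hij⟩
            rintro rfl
            rw [hR.par_root] at hi
            exact ht ⟨i, hi⟩
          · rw [if_neg hij] at hi
            exact absurd ⟨i, hi⟩ ht
      obtain ⟨htr, i', hi', hor⟩ := key
      by_cases hjk : j < k
      · refine ⟨(t, ⟨j + 1, by omega⟩), ⟨i', ?_⟩, hadj t j hjk, ?_⟩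
        · dsimp only
          split_ifs with hc
          · exact hi'
          · exact hor.resolve_left (by omega)
        · simp only [if_neg hteq]
          omega
      · obtain rfl : j = k := by omega
        refine ⟨(par t, 0), ⟨i', by simpa using hi'⟩, hadj_last t htr, ?_⟩
        simp only [if_neg hteq, hR.depth_par t htr, Fin.val_zero]
        split_ifs
        · omega
        · ring_nf
          omega
  · have hstep : ∀ x y t i, t ≠ r → (t, i) ∈ ρ x → (par t, i) ∈ ρ y →
        ∃ t₁ t₂, T'.Adj t₁ t₂ ∧ x ∈ pathBag par ρ t₁ ∪ pathBag par ρ t₂ ∧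
          y ∈ pathBag par ρ t₁ ∪ pathBag par ρ t₂ := by
      intro x y t i ht hx hy
      exact ⟨_, _, hadj t i.val i.isLt, Or.inl ⟨i, by simpa using hx⟩,
        Or.inr ⟨i, by simpa using hy⟩⟩
    intro x y hxy
    obtain ⟨⟨t, i⟩, hx, ⟨u, l⟩, hy, hab⟩ := hedge x y hxy
    simp only [boxProd_adj] at hab
    rcases hab with ⟨htu, rfl⟩ | ⟨-, rfl⟩
    · rcases (hR.adj_iff t u).1 htu with ⟨ht, rfl⟩ | ⟨hu, rfl⟩
      · exact hstep x y t i ht hx hy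
      · obtain ⟨t₁, t₂, h1, h2, h3⟩ := hstep y x u i hu hy hx
        exact ⟨t₁, t₂, h1, h3, h2⟩
    · exact ⟨_, _, hadj t 0 hk, Or.inl ⟨i, by simpa using hx⟩, Or.inl ⟨l, by simpa using hy⟩⟩
  · have hsymm : ∀ A B : Set V, marginalEdges G A B = marginalEdges G B A := by
      intro A B
      ext e
      constructor
      · rintro ⟨x, y, h1, h2, h3, h4, h5, h6⟩
        exact ⟨x, y, h1, h2, h3.symm, h4.symm, h6, h5⟩
      · rintro ⟨x, y, h1, h2, h3, h4, h5, h6⟩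
        exact ⟨x, y, h1, h2, h3.symm, h4.symm, h6, h5⟩
    have hpar : ∀ p, p ≠ (r, ⟨k, by omega⟩) → (marginalEdges G (pathBag par ρ p)
        (pathBag par ρ (pathPar r par k p))).Subsingleton := by
      rintro ⟨t, j, hj⟩ hne'
      by_cases hjk : j < k
      · rw [pathPar_of_lt r par t hjk]
        -- Only slot `j` changes between the two bags.
        have hA : ∀ x ∈ pathBag par ρ (t, ⟨j, hj⟩), x ∉ pathBag par ρ (t, ⟨j + 1, by omega⟩) →
            (t, ⟨j, hjk⟩) ∈ ρ x := by
          rintro x ⟨i, hi⟩ hx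
          dsimp only at hi
          rcases lt_trichotomy i.val j with hij | hij | hij
          · rw [if_pos hij] at hi
            exact absurd ⟨i, by rwa [if_pos (by dsimp only; omega)]⟩ hx
          · rw [if_neg (by omega)] at hi
            rwa [← show i = ⟨j, hjk⟩ from Fin.ext hij]
          · rw [if_neg (by omega)] at hi
            exact absurd ⟨i, by rwa [if_neg (by dsimp only; omega)]⟩ hx
        have hB : ∀ x ∈ pathBag par ρ (t, ⟨j + 1, by omega⟩), x ∉ pathBag par ρ (t, ⟨j, hj⟩) →
            (par t, ⟨j, hjk⟩) ∈ ρ x := by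
          rintro x ⟨i, hi⟩ hx
          dsimp only at hi
          rcases lt_trichotomy i.val j with hij | hij | hij
          · rw [if_pos (by omega)] at hi
            exact absurd ⟨i, by rwa [if_pos (by dsimp only; omega)]⟩ hx
          · rw [if_pos (by omega)] at hi
            rwa [← show i = ⟨j, hjk⟩ from Fin.ext hij]
          · rw [if_neg (by omega)] at hi
            exact absurd ⟨i, by rwa [if_neg (by dsimp only; omega)]⟩ hx
        have hform : ∀ e ∈ marginalEdges G (pathBag par ρ (t, ⟨j, hj⟩))
            (pathBag par ρ (t, ⟨j + 1, by omega⟩)), ∃ x y, e = s(x, y) ∧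
              (t, ⟨j, hjk⟩) ∈ ρ x ∧ (par t, ⟨j, hjk⟩) ∈ ρ y := by
          rintro e ⟨x, y, rfl, -, hx, hy, h1, h2⟩
          simp only [Set.mem_union] at hx hy
          by_cases hxA : x ∈ pathBag par ρ (t, ⟨j, hj⟩)
          · exact ⟨x, y, rfl, hA x hxA (by tauto), hB y (by tauto) (by tauto)⟩
          · exact ⟨y, x, Sym2.eq_swap, hA y (by tauto) (by tauto), hB x (by tauto) hxA⟩
        intro e he e' he'
        obtain ⟨x, y, rfl, hx, hy⟩ := hform e he
        obtain ⟨x', y', rfl, hx', hy'⟩ := hform e' he'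
        rw [huniq _ x x' hx hx', huniq _ y y' hy hy']
      · obtain rfl : j = k := by omega
        have ht : t ≠ r := by rintro rfl; exact hne' rfl
        rw [pathPar_last par j ht, ← hlast t ht]
        rintro e ⟨x, y, -, -, hx, hy, h1, -⟩
        simp only [Set.union_self] at hx hy
        exact absurd ⟨hx, hy⟩ h1
    intro p q hpq
    rcases (hR'.adj_iff p q).1 hpq with ⟨hp, rfl⟩ | ⟨hq, rfl⟩
    · exact hpar p hp
    · rw [hsymm]
      exact hpar q hq
  · refine csSup_le ⟨_, (r, 0), rfl⟩ ?_
    rintro _ ⟨p, rfl⟩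
    -- Distinct vertices of a bag occupy distinct slots.
    have : Nonempty (Fin k) := ⟨⟨0, hk⟩⟩
    choose! f hf using fun x (hx : x ∈ pathBag par ρ p) => hx
    have := Set.ncard_le_ncard_of_injOn (s := pathBag par ρ p) (t := Set.univ) f
      (fun _ _ => Set.mem_univ _) (fun x hx y hy hxy => huniq _ x y (hf x hx) (hxy ▸ hf y hy))
    simpa [Set.ncard_univ] using this

/-! ### Equality of the two minima -/

/-- For every nonempty finite simple graph `G`, the Cartesian tree product
number of `G` equals the minimum width of a loose tree-decomposition of `G`. -/
theorem ctp_eq_min_ltd_width {V : Type} [Fintype V] [Nonempty V] (G : SimpleGraph V) :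
    ctp G = sInf {n | ∃ (τ : Type) (T : SimpleGraph τ) (χ : τ → Set V),
      IsLTD G T χ ∧ ltdWidth χ = n} := by
  have hsub : ∀ n, (∃ (τ : Type) (T : SimpleGraph τ) (χ : τ → Set V),
      IsLTD G T χ ∧ ltdWidth χ = n) → 1 ≤ n ∧ ∃ (τ : Type) (T : SimpleGraph τ), Finite τ ∧
        T.IsTree ∧ IsMinor G (T.boxProd (⊤ : SimpleGraph (Fin n))) := by
    rintro _ ⟨τ, T, χ, h, rfl⟩
    have hfin : Finite τ := h.1
    obtain ⟨h1, h2⟩ := h.isMinor (k := ltdWidth χ) fun t =>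
      le_csSup (Set.finite_range _).bddAbove ⟨t, rfl⟩
    exact ⟨h1, τ, T, hfin, h.2.1, h2⟩
  have hex : ∀ k, (1 ≤ k ∧ ∃ (τ : Type) (T : SimpleGraph τ), Finite τ ∧
      T.IsTree ∧ IsMinor G (T.boxProd (⊤ : SimpleGraph (Fin k)))) →
        ∃ n ≤ k, ∃ (τ : Type) (T : SimpleGraph τ) (χ : τ → Set V),
          IsLTD G T χ ∧ ltdWidth χ = n := by
    rintro k ⟨hk, τ, T, hfin, hT, hG⟩
    obtain ⟨τ', T', χ, h, hw⟩ := hG.exists_isLTD hT hk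
    exact ⟨_, hw, τ', T', χ, h, rfl⟩
  -- The junk value of `sInf ∅` does no harm: the two sets are empty simultaneously.
  rcases Set.eq_empty_or_nonempty {k | 1 ≤ k ∧ ∃ (τ : Type) (T : SimpleGraph τ), Finite τ ∧
      T.IsTree ∧ IsMinor G (T.boxProd (⊤ : SimpleGraph (Fin k)))} with hS | hS
  · have : {n | ∃ (τ : Type) (T : SimpleGraph τ) (χ : τ → Set V),
        IsLTD G T χ ∧ ltdWidth χ = n} = ∅ :=
      Set.eq_empty_of_forall_notMem fun n hn => hS.le (hsub n hn)
    rw [ctp, hS, this]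
  · apply le_antisymm
    · obtain ⟨n, -, hn⟩ := hex _ (Nat.sInf_mem hS)
      have hN : {n | ∃ (τ : Type) (T : SimpleGraph τ) (χ : τ → Set V),
          IsLTD G T χ ∧ ltdWidth χ = n}.Nonempty := ⟨n, hn⟩
      exact Nat.sInf_le (hsub _ (Nat.sInf_mem hN))
    · obtain ⟨n, hle, hn⟩ := hex _ (Nat.sInf_mem hS)
      exact (Nat.sInf_le hn).trans hle
end

section
/- Let G and H be finite simple graphs with H a minor of G. If G has a loose tree-decomposition of width at most k, then H has a loose tree-decomposition of width at most k. -/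
/-!
Let `ρ` be a minor model of `H` in `G`, and let `(T, χ)` be a loose tree-decomposition of `G`.
The same tree `T` works for `H`, with the bag at `t` consisting of the vertices `x` whose branch set
`ρ x` meets `χ t` (`contractedBag`).

* Bags do not grow, since the branch sets are disjoint (`ncard_contractedBag_le`).
* The trace of `x` is the union of the traces of the vertices in `ρ x`. Vertices adjacent in `G` need
  not share a bag, but their traces meet or are joined by a tree-edge, so this union is connected
  (`contractedBag_trace_reachable`).
* An edge `xy` of `H` comes from an edge `ab` of `G` with `a ∈ ρ x`, `b ∈ ρ y`, and a tree-edge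
  covering `ab` covers `xy`. If `xy` is marginal at `t₁t₂`, the traces of `x` and `y` lie on
  different sides of the bridge `t₁t₂`, so `t₁t₂` is the only tree-edge that can cover `ab`, and `ab`
  is marginal at `t₁t₂` too (`exists_marginal_lift`). Disjointness of the branch sets
  shows that `ab` determines `xy`, so uniqueness of marginal edges passes from `G` to `H`.
-/

open SimpleGraph

/-- The vertices of the minor whose branch set under `ρ` meets the bag `χ t`. -/
def contractedBag {V W τ : Type} (ρ : W → Set V) (χ : τ → Set V) (t : τ) : Set W :=
  {x | ∃ a ∈ ρ x, a ∈ χ t}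

theorem ncard_contractedBag_le {V W τ : Type} [Finite V] (ρ : W → Set V)
    (hdisj : ∀ x y, x ≠ y → Disjoint (ρ x) (ρ y)) (χ : τ → Set V) (t : τ) :
    (contractedBag ρ χ t).ncard ≤ (χ t).ncard := by
  have h : ∀ x : contractedBag ρ χ t, ∃ a : χ t, a.1 ∈ ρ x := fun ⟨x, a, ha, hat⟩ => ⟨⟨a, hat⟩, ha⟩
  choose f hf using h
  refine Nat.card_le_card_of_injective f fun x y hxy => Subtype.ext (by_contra fun hne => ?_)
  exact Set.disjoint_left.1 (hdisj _ _ hne) (hf x) (hxy ▸ hf y)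

/-- A connected vertex set containing `t₁` but not `t₂` lies on the side of `t₁` once the edge
`t₁t₂` is deleted. -/
theorem ConnectedIn.reachable_deleteEdges {τ : Type} {T : SimpleGraph τ} {S : Set τ}
    (hS : ConnectedIn T S) {t₁ t₂ s : τ} (h₁ : t₁ ∈ S) (h₂ : t₂ ∉ S) (hs : s ∈ S) :
    (T.deleteEdges {s(t₁, t₂)}).Reachable t₁ s := by
  let f : T.induce S →g T.deleteEdges {s(t₁, t₂)} :=
    { toFun := Subtype.val
      map_rel' := by
        rintro ⟨u, hu⟩ ⟨v, hv⟩ huv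
        refine (deleteEdges_adj ..).2 ⟨huv, fun h => ?_⟩
        rcases Sym2.eq_iff.1 (Set.mem_singleton_iff.1 h) with ⟨_, h⟩ | ⟨h, _⟩
        · exact h₂ (h ▸ hv)
        · exact h₂ (h ▸ hu) }
  exact (hS.preconnected ⟨t₁, h₁⟩ ⟨s, hs⟩).map f

/-- A walk inside the branch set `ρ x` lifts to the trace of `x`: each of its edges is followed by a
step along at most one tree-edge between the traces of its ends. -/
theorem contractedBag_trace_reachable {V W τ : Type} {G : SimpleGraph V} {T : SimpleGraph τ}
    {χ : τ → Set V} (ρ : W → Set V) (x : W)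
    (htrace : ∀ a : V, {t | a ∈ χ t}.Nonempty ∧ ConnectedIn T {t | a ∈ χ t})
    (hcover : ∀ a b : V, G.Adj a b →
      ∃ t₁ t₂ : τ, T.Adj t₁ t₂ ∧ a ∈ χ t₁ ∪ χ t₂ ∧ b ∈ χ t₁ ∪ χ t₂)
    {a b : ρ x} (p : (G.induce (ρ x)).Walk a b) (t s : τ) (ht : a.1 ∈ χ t) (hs : b.1 ∈ χ s) :
    (T.induce {t | x ∈ contractedBag ρ χ t}).Reachable ⟨t, a, a.2, ht⟩ ⟨s, b, b.2, hs⟩ := by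
  have hone : ∀ (c : ρ x) (t s : τ) (ht : c.1 ∈ χ t) (hs : c.1 ∈ χ s),
      (T.induce {t | x ∈ contractedBag ρ χ t}).Reachable ⟨t, c, c.2, ht⟩ ⟨s, c, c.2, hs⟩ := by
    intro c t s ht hs
    have hsub : {t | c.1 ∈ χ t} ⊆ {t | x ∈ contractedBag ρ χ t} := fun t h => ⟨c, c.2, h⟩
    exact ((htrace c).2.preconnected ⟨t, ht⟩ ⟨s, hs⟩).map
      (induceHomOfLE T hsub).toHom
  induction p generalizing t with
  | nil => exact hone _ t s ht hs
  | @cons a c b hac p ih =>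
    have hstep : ∃ (t' s' : τ), a.1 ∈ χ t' ∧ c.1 ∈ χ s' ∧ (t' = s' ∨ T.Adj t' s') := by
      obtain ⟨t₁, t₂, h, ha, hc⟩ := hcover a c hac
      rcases ha with ha | ha <;> rcases hc with hc | hc
      · exact ⟨t₁, t₁, ha, hc, .inl rfl⟩
      · exact ⟨t₁, t₂, ha, hc, .inr h⟩
      · exact ⟨t₂, t₁, ha, hc, .inr h.symm⟩
      · exact ⟨t₂, t₂, ha, hc, .inl rfl⟩
    obtain ⟨t', s', ha, hc, h⟩ := hstep
    refine (hone a t t' ht ha).trans (Reachable.trans ?_ (ih s' hc hs))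
    rcases h with rfl | h
    · exact .rfl
    · exact Adj.reachable (G := T.induce {t | x ∈ contractedBag ρ χ t})
        (u := ⟨t', a, a.2, ha⟩) (v := ⟨s', c, c.2, hc⟩) h

/-- A marginal edge of `H` for the contracted bags comes from a marginal edge of `G` at the same
tree-edge. -/
theorem exists_marginal_lift {V W τ : Type} {G : SimpleGraph V} {H : SimpleGraph W}
    {T : SimpleGraph τ} {χ : τ → Set V} (ρ : W → Set V) (hT : T.IsTree)
    (hedge : ∀ x y, H.Adj x y → ∃ a ∈ ρ x, ∃ b ∈ ρ y, G.Adj a b)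
    (hcover : ∀ a b : V, G.Adj a b →
      ∃ t₁ t₂ : τ, T.Adj t₁ t₂ ∧ a ∈ χ t₁ ∪ χ t₂ ∧ b ∈ χ t₁ ∪ χ t₂)
    (hconn : ∀ x, ConnectedIn T {t | x ∈ contractedBag ρ χ t})
    {t₁ t₂ : τ} (ht : T.Adj t₁ t₂) {e : Sym2 W}
    (he : e ∈ marginalEdges H (contractedBag ρ χ t₁) (contractedBag ρ χ t₂)) :
    ∃ x y a b, e = s(x, y) ∧ a ∈ ρ x ∧ b ∈ ρ y ∧ s(a, b) ∈ marginalEdges G (χ t₁) (χ t₂) := by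
  have horient : ∃ x y, e = s(x, y) ∧ H.Adj x y ∧
      x ∈ contractedBag ρ χ t₁ ∧ x ∉ contractedBag ρ χ t₂ ∧
      y ∈ contractedBag ρ χ t₂ ∧ y ∉ contractedBag ρ χ t₁ := by
    obtain ⟨x, y, rfl, hxy, hx, hy, h₁, h₂⟩ := he
    by_cases hx₁ : x ∈ contractedBag ρ χ t₁
    · have hy₁ : y ∉ contractedBag ρ χ t₁ := fun h => h₁ ⟨hx₁, h⟩
      have hy₂ := hy.resolve_left hy₁
      exact ⟨x, y, rfl, hxy, hx₁, fun h => h₂ ⟨h, hy₂⟩, hy₂, hy₁⟩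
    · have hx₂ := hx.resolve_left hx₁
      have hy₂ : y ∉ contractedBag ρ χ t₂ := fun h => h₂ ⟨hx₂, h⟩
      exact ⟨y, x, Sym2.eq_swap, hxy.symm, hy.resolve_right hy₂, hy₂, hx₂, hx₁⟩
  obtain ⟨x, y, rfl, hxy, hx₁, hx₂, hy₂, hy₁⟩ := horient
  obtain ⟨a, ha, b, hb, hab⟩ := hedge x y hxy
  have hbridge : ¬ (T.deleteEdges {s(t₁, t₂)}).Reachable t₁ t₂ :=
    isBridge_iff.1 (isAcyclic_iff_forall_adj_isBridge.1 hT.isAcyclic ht)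
  have hxside : ∀ s, a ∈ χ s → (T.deleteEdges {s(t₁, t₂)}).Reachable t₁ s := fun s hs =>
    (hconn x).reachable_deleteEdges hx₁ hx₂ ⟨a, ha, hs⟩
  have hyside : ∀ s, b ∈ χ s → (T.deleteEdges {s(t₁, t₂)}).Reachable t₂ s := fun s hs => by
    rw [Sym2.eq_swap]
    exact (hconn y).reachable_deleteEdges hy₂ hy₁ ⟨b, hb, hs⟩
  have hcross : ∀ s₁ s₂, T.Adj s₁ s₂ → a ∈ χ s₁ → b ∈ χ s₂ → a ∈ χ t₁ ∧ b ∈ χ t₂ := by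
    intro s₁ s₂ hs has hbs
    by_cases h : s(s₁, s₂) = s(t₁, t₂)
    · rcases Sym2.eq_iff.1 h with ⟨rfl, rfl⟩ | ⟨rfl, rfl⟩
      · exact ⟨has, hbs⟩
      · exact (hx₂ ⟨a, ha, has⟩).elim
    · have hadj : (T.deleteEdges {s(t₁, t₂)}).Adj s₁ s₂ := (deleteEdges_adj ..).2 ⟨hs, h⟩
      exact (hbridge (((hxside _ has).trans hadj.reachable).trans (hyside _ hbs).symm)).elim
  have hkey : a ∈ χ t₁ ∧ b ∈ χ t₂ := by
    obtain ⟨s₁, s₂, hs, has, hbs⟩ := hcover a b hab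
    rcases has with has | has <;> rcases hbs with hbs | hbs
    · exact (hbridge ((hxside _ has).trans (hyside _ hbs).symm)).elim
    · exact hcross _ _ hs has hbs
    · exact hcross _ _ hs.symm has hbs
    · exact (hbridge ((hxside _ has).trans (hyside _ hbs).symm)).elim
  exact ⟨x, y, a, b, rfl, ha, hb, a, b, rfl, hab, .inl hkey.1, .inr hkey.2,
    fun h => hy₁ ⟨b, hb, h.2⟩, fun h => hx₂ ⟨a, ha, h.1⟩⟩

/-- If `H` is a minor of `G` and `G` has a loose tree-decomposition of width
at most `k`, then so does `H`. -/
theorem ltd_width_minor_closed {V W : Type} [Fintype V] [Fintype W]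
    (G : SimpleGraph V) (H : SimpleGraph W) (hHG : IsMinor H G) (k : ℕ)
    (hG : ∃ (τ : Type) (T : SimpleGraph τ) (χ : τ → Set V),
      IsLTD G T χ ∧ ltdWidth χ ≤ k) :
    ∃ (τ : Type) (T : SimpleGraph τ) (χ : τ → Set W),
      IsLTD H T χ ∧ ltdWidth χ ≤ k := by
  obtain ⟨ρ, hne, hρconn, hdisj, hedge⟩ := hHG
  obtain ⟨τ, T, χ, ⟨hfin, hT, htrace, hcover, hmarg⟩, hwidth⟩ := hG
  have huniq : ∀ {x y : W} {a : V}, a ∈ ρ x → a ∈ ρ y → x = y := fun hx hy =>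
    by_contra fun h => Set.disjoint_left.1 (hdisj _ _ h) hx hy
  have htrace' : ∀ x : W, {t | x ∈ contractedBag ρ χ t}.Nonempty ∧
      ConnectedIn T {t | x ∈ contractedBag ρ χ t} := by
    intro x
    obtain ⟨a, ha⟩ := hne x
    obtain ⟨t, ht⟩ := (htrace a).1
    refine ⟨⟨t, a, ha, ht⟩, (connected_iff _).2 ⟨?_, ⟨⟨t, a, ha, ht⟩⟩⟩⟩
    rintro ⟨t, a, ha, ht⟩ ⟨s, b, hb, hs⟩
    obtain ⟨p⟩ := (hρconn x).preconnected ⟨a, ha⟩ ⟨b, hb⟩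
    exact contractedBag_trace_reachable ρ x htrace hcover p t s ht hs
  refine ⟨τ, T, contractedBag ρ χ, ⟨hfin, hT, htrace', ?_, ?_⟩, ?_⟩
  · intro x y hxy
    obtain ⟨a, ha, b, hb, hab⟩ := hedge x y hxy
    obtain ⟨t₁, t₂, ht, hat, hbt⟩ := hcover a b hab
    exact ⟨t₁, t₂, ht, hat.imp (fun h => ⟨a, ha, h⟩) (fun h => ⟨a, ha, h⟩),
      hbt.imp (fun h => ⟨b, hb, h⟩) (fun h => ⟨b, hb, h⟩)⟩
  · intro t₁ t₂ ht e he e' he'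
    obtain ⟨x, y, a, b, rfl, ha, hb, hab⟩ :=
      exists_marginal_lift ρ hT hedge hcover (fun x => (htrace' x).2) ht he
    obtain ⟨x', y', a', b', rfl, ha', hb', hab'⟩ :=
      exists_marginal_lift ρ hT hedge hcover (fun x => (htrace' x).2) ht he'
    rcases Sym2.eq_iff.1 (hmarg t₁ t₂ ht hab hab') with ⟨rfl, rfl⟩ | ⟨rfl, rfl⟩
    · rw [huniq ha ha', huniq hb hb']
    · rw [huniq ha hb', huniq hb ha', Sym2.eq_swap]
  · have : Nonempty τ := hT.connected.nonempty
    refine csSup_le (Set.range_nonempty _) ?_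
    rintro _ ⟨t, rfl⟩
    exact (ncard_contractedBag_le ρ hdisj χ t).trans
      ((le_csSup (Set.finite_range _).bddAbove ⟨t, rfl⟩).trans hwidth)
end

section
/- Let G be a finite connected simple graph with at least one edge. The maximum order of a tight bramble of G equals 1 if and only if G is a tree (i.e. G contains no cycle). In particular, every tight bramble of a tree has order at most 1, and every connected graph containing a cycle has a tight bramble of order 2. -/
/-!
Two facts carry the proof.

In a tree, two disjoint connected sets are joined by at most one edge, since two distinct edges
would give two distinct paths with the same ends. So the members of a tight bramble of a tree are
pairwise intersecting subtrees, and these have a common vertex (the Helly property). The latter is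
seen by fixing a root `r`: among the members, choose one, `S`, whose vertex `t` closest to the root
is as far from the root as possible. If another member `S'` meets `S` at `x`, then the path from `x`
to `r` passes through `t`, and it stays in `S'` until it is closer to the root than every vertex
of `S'`; by the choice of `S` this has not yet happened at `t`, so `t ∈ S'`. Hence `{t}` is a cover.

If `G` has a cycle with vertex set `C`, the sets `C \ {v}` for `v ∈ C` carry paths and have at least two
vertices, and they pairwise intersect because `C` has at least three vertices. One vertex `v` never
covers them, as it misses `C \ {v}` (or all members, if `v ∉ C`), while any two vertices of `C` do.
-/

open SimpleGraph

/-! ### Connected sets in a tree -/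

/-- A path of a tree between two vertices of a connected set stays inside the set. -/
lemma tree_path_in_connected {V : Type} {G : SimpleGraph V} (hG : G.IsTree) {S : Set V}
    (hS : ConnectedIn G S) {x y : V} (hx : x ∈ S) (hy : y ∈ S) {p : G.Walk x y} (hp : p.IsPath) :
    ∀ z ∈ p.support, z ∈ S := by
  obtain ⟨w, hw⟩ := hS.exists_isPath ⟨x, hx⟩ ⟨y, hy⟩
  have hw' : (w.map (Embedding.induce S).toHom).IsPath :=
    hw.map (Embedding.induce (G := G) S).injective
  have hpw : p = w.map (Embedding.induce S).toHom := (hG.existsUnique_path x y).unique hp hw'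
  intro z hz
  have hz' : z ∈ (w.map (Embedding.induce S).toHom).support := hpw ▸ hz
  rw [Walk.support_map, List.mem_map] at hz'
  obtain ⟨a, -, rfl⟩ := hz'
  exact a.2

/-- In a tree, disjoint connected sets are joined by at most one edge, so touching connected sets
intersect. -/
lemma tree_touching_inter {V : Type} {G : SimpleGraph V} (hG : G.IsTree) {S T : Set V}
    (hS : ConnectedIn G S) (hT : ConnectedIn G T) (h : Touching G S T) : (S ∩ T).Nonempty := by
  rcases h with h | ⟨x₁, x₂, y₁, y₂, hx, hy, hne, hx₁, hy₁, hx₂, hy₂⟩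
  · exact h
  by_contra hdisj
  have hd : ∀ z, z ∈ S → z ∉ T := fun z hzS hzT => hdisj ⟨z, hzS, hzT⟩
  obtain ⟨p, hp, -⟩ := hG.existsUnique_path x₁ y₁
  obtain ⟨q, hq, -⟩ := hG.existsUnique_path x₂ y₂
  have hpS := tree_path_in_connected hG hS hx₁ hy₁ hp
  have hqT := tree_path_in_connected hG hT hx₂ hy₂ hq
  have h1 : (Walk.cons hx q).IsPath := hq.cons fun hm => hd _ hx₁ (hqT _ hm)
  have h2 : (p.concat hy).IsPath := hp.concat (fun hm => hd _ (hpS _ hm) hy₂) hy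
  have heq : Walk.cons hx q = p.concat hy := (hG.existsUnique_path x₁ y₂).unique h1 h2
  have hsupp := congrArg Walk.support heq
  rw [Walk.support_cons, Walk.support_concat] at hsupp
  -- Comparing supports, `x₂` can only be the last vertex `y₂`, and `y₁` only the first one `x₁`.
  have e2 : x₂ = y₂ := by
    have : x₂ ∈ p.support ++ [y₂] := by rw [← hsupp]; simp
    rcases List.mem_append.1 this with hm | hm
    · exact absurd hx₂ (hd _ (hpS _ hm))
    · simpa using hm
  have e1 : y₁ = x₁ := by
    have : y₁ ∈ x₁ :: q.support := by rw [hsupp]; simp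
    rcases List.mem_cons.1 this with hm | hm
    · exact hm
    · exact absurd (hqT _ hm) (hd _ hy₁)
  exact hne (by rw [e1, e2])

/-- Let `t` be a vertex of the connected set `S` closest to the root `r`. The path from a vertex
of `S` to `r` runs inside `S` up to `t`, and its remaining vertices are closer to `r` than `t`. -/
lemma tree_path_to_root {V : Type} {G : SimpleGraph V} (hG : G.IsTree) {S : Set V}
    (hS : ConnectedIn G S) {r t x : V} (ht : t ∈ S) (hmin : ∀ y ∈ S, G.dist t r ≤ G.dist y r)
    (hx : x ∈ S) {q : G.Walk x r} (hq : q.IsPath) :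
    t ∈ q.support ∧ ∀ y ∈ q.support, y ∈ S ∨ G.dist y r < G.dist t r := by
  classical
  obtain ⟨p₁, hp₁, -⟩ := hG.existsUnique_path x t
  obtain ⟨p₂, hp₂, hlen⟩ := hG.connected.exists_path_of_dist t r
  have h1 := tree_path_in_connected hG hS hx ht hp₁
  have h2 : ∀ y ∈ p₂.support.tail, G.dist y r < G.dist t r := by
    intro y hy
    cases p₂ with
    | nil => simp at hy
    | cons h p =>
      have hy' : y ∈ p.support := by simpa using hy
      have hl : (p.dropUntil y hy').length ≤ p.length := p.length_dropUntil_le_length hy'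
      have := dist_le (p.dropUntil y hy')
      rw [Walk.length_cons] at hlen
      omega
  have happ : (p₁.append p₂).IsPath := by
    rw [Walk.isPath_def, Walk.support_append, List.nodup_append']
    refine ⟨hp₁.support_nodup, hp₂.support_nodup.tail, ?_⟩
    intro y hy hy'
    exact absurd (h2 y hy') (not_lt.2 (hmin y (h1 y hy)))
  have heq : q = p₁.append p₂ := (hG.existsUnique_path x r).unique hq happ
  rw [heq, Walk.support_append]
  refine ⟨List.mem_append_left _ p₁.end_mem_support, fun y hy => ?_⟩
  rcases List.mem_append.1 hy with hm | hm
  · exact Or.inl (h1 y hm)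
  · exact Or.inr (h2 y hm)

/-- The Helly property of subtrees of a tree. -/
lemma tree_helly {V : Type} [Finite V] {G : SimpleGraph V} (hG : G.IsTree) {B : Set (Set V)}
    (hconn : ∀ S ∈ B, ConnectedIn G S) (hint : ∀ S ∈ B, ∀ T ∈ B, (S ∩ T).Nonempty) :
    ∃ t, ∀ S ∈ B, t ∈ S := by
  obtain ⟨r⟩ := hG.connected.nonempty
  rcases B.eq_empty_or_nonempty with rfl | ⟨S₀, hS₀⟩
  · exact ⟨r, by simp⟩
  have hnear : ∀ S ∈ B, ∃ t ∈ S, ∀ y ∈ S, G.dist t r ≤ G.dist y r := fun S hS =>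
    Set.exists_min_image S (fun y => G.dist y r) S.toFinite (by simpa using hint S hS S hS)
  obtain ⟨t₀, ht₀, hmin₀⟩ := hnear S₀ hS₀
  obtain ⟨t, ⟨S, hS, ht, hmin⟩, hmax⟩ :=
    Set.exists_max_image {t | ∃ S ∈ B, t ∈ S ∧ ∀ y ∈ S, G.dist t r ≤ G.dist y r}
      (fun y => G.dist y r) (Set.toFinite _) ⟨t₀, S₀, hS₀, ht₀, hmin₀⟩
  refine ⟨t, fun S' hS' => ?_⟩
  obtain ⟨x, hxS, hxS'⟩ := hint S hS S' hS'
  obtain ⟨t', ht', hmin'⟩ := hnear S' hS'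
  obtain ⟨q, hq, -⟩ := hG.existsUnique_path x r
  have htq := (tree_path_to_root hG (hconn S hS) ht hmin hxS hq).1
  rcases (tree_path_to_root hG (hconn S' hS') ht' hmin' hxS' hq).2 t htq with h | h
  · exact h
  · exact absurd h (not_lt.2 (hmax t' ⟨S', hS', ht', hmin'⟩))

/-! ### The order of a bramble -/

lemma brambleOrder_le {V : Type} {B : Set (Set V)} {S : Set V} (h : IsCover B S) :
    brambleOrder B ≤ S.ncard :=
  Nat.sInf_le ⟨S, h, rfl⟩

/-- The order is attained as soon as some cover exists, i.e. as soon as all members are nonempty. -/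
lemma exists_cover_ncard_eq {V : Type} {B : Set (Set V)} (h : ∀ S ∈ B, S.Nonempty) :
    ∃ S : Set V, IsCover B S ∧ S.ncard = brambleOrder B :=
  Nat.sInf_mem (s := {n | ∃ S : Set V, IsCover B S ∧ S.ncard = n})
    ⟨_, Set.univ, fun S hS => by simpa using h S hS, rfl⟩

lemma TightBramble.nonempty {V : Type} {G : SimpleGraph V} {B : Set (Set V)}
    (h : TightBramble G B) : ∀ S ∈ B, S.Nonempty := fun S hS =>
  Set.nonempty_of_ncard_ne_zero (by have := h.2.1 S hS; omega)

lemma tree_brambleOrder_le_one {V : Type} [Finite V] {G : SimpleGraph V} (hG : G.IsTree)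
    {B : Set (Set V)} (hB : TightBramble G B) : brambleOrder B ≤ 1 := by
  obtain ⟨t, ht⟩ := tree_helly hG hB.1 fun S hS T hT => by
    by_cases hST : S = T
    · subst hST
      simpa using hB.nonempty S hS
    · exact tree_touching_inter hG (hB.1 S hS) (hB.1 T hT) (hB.2.2 hS hT hST)
  have hcov : IsCover B {t} := fun S hS => ⟨t, rfl, ht S hS⟩
  simpa using brambleOrder_le hcov

/-- The whole vertex set of a connected graph with an edge forms a bramble of order one. -/
lemma exists_bramble_order_one {V : Type} [Finite V] {G : SimpleGraph V} (hconn : G.Connected)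
    (hedge : G.edgeSet.Nonempty) : ∃ B, TightBramble G B ∧ brambleOrder B = 1 := by
  obtain ⟨e, he⟩ := hedge
  induction e using Sym2.ind with
  | _ a b =>
  have hab : a ≠ b := G.ne_of_adj he
  have hB : TightBramble G {Set.univ} := by
    refine ⟨?_, ?_, Set.pairwise_singleton _ _⟩
    · rintro S rfl
      exact (induceUnivIso G).connected_iff.2 hconn
    · rintro S rfl
      have := Set.ncard_le_ncard (Set.subset_univ {a, b})
      rwa [Set.ncard_pair hab] at this
  refine ⟨_, hB, le_antisymm ?_ ?_⟩
  · have hcov : IsCover {Set.univ} {a} := by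
      rintro S rfl
      exact ⟨a, rfl, trivial⟩
    simpa using brambleOrder_le hcov
  · obtain ⟨S, hS, hcard⟩ := exists_cover_ncard_eq hB.nonempty
    rw [← hcard]
    exact (Set.ncard_pos S.toFinite).2 ((hS _ rfl).mono Set.inter_subset_left)

/-! ### The bramble of a cycle -/

/-- Removing a vertex from the vertex set of a cycle leaves the vertex set of a path. -/
lemma cycle_diff_connected {V : Type} {G : SimpleGraph V} {u : V} {c : G.Walk u u}
    (hc : c.IsCycle) {v : V} (hv : v ∈ c.support) :
    ConnectedIn G ({x | x ∈ c.support} \ {v}) := by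
  classical
  have hd : (c.rotate v hv).IsCycle := hc.rotate hv
  have hmem : ∀ x, x ∈ (c.rotate v hv).support ↔ x ∈ c.support := fun x =>
    c.mem_support_rotate_iff v hv
  generalize c.rotate v hv = d at hd hmem
  cases d with
  | nil => exact absurd hd (by simp)
  | cons h p =>
    have hp : p.IsPath := ((Walk.cons_isCycle_iff p h).1 hd).1
    have hnil : ¬ p.Nil := fun hn => h.ne' hn.eq
    have hs := Walk.support_dropLast_concat hnil
    have hnd := hp.support_nodup
    rw [← hs, List.nodup_append'] at hnd
    have hvn : v ∉ p.dropLast.support := fun hm => hnd.2.2 hm (by simp)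
    have hset : {x | x ∈ c.support} \ {v} = {x | x ∈ p.dropLast.support} := by
      ext x
      have hx : x ∈ c.support ↔ x = v ∨ x ∈ p.dropLast.support := by
        rw [← hmem, Walk.support_cons, ← hs]
        simp
        tauto
      simp only [Set.mem_sdiff, Set.mem_ofPred_eq, Set.mem_singleton_iff, hx]
      constructor
      · rintro ⟨h1 | h1, h2⟩
        · exact absurd h1 h2
        · exact h1
      · intro h1
        exact ⟨Or.inr h1, fun h2 => hvn (h2 ▸ h1)⟩
    rw [hset]
    exact p.dropLast.connected_induce_support

lemma three_le_cycle_ncard {V : Type} [Finite V] {G : SimpleGraph V} {u : V} {c : G.Walk u u}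
    (hc : c.IsCycle) : 3 ≤ {x | x ∈ c.support}.ncard := by
  classical
  have h3 := hc.three_le_length
  have hsub : ((c.support.tail.toFinset : Finset V) : Set V) ⊆ {x | x ∈ c.support} := by
    intro x hx
    exact List.mem_of_mem_tail (by simpa using hx)
  have hle := Set.ncard_le_ncard hsub
  rw [Set.ncard_coe_finset, List.toFinset_card_of_nodup hc.support_nodup, List.length_tail,
    Walk.length_support] at hle
  omega

lemma exists_bramble_order_two {V : Type} [Finite V] {G : SimpleGraph V} (hG : ¬ G.IsAcyclic) :
    ∃ B, TightBramble G B ∧ brambleOrder B = 2 := by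
  obtain ⟨u, c, hc⟩ : ∃ (u : V) (c : G.Walk u u), c.IsCycle := by
    simpa [IsAcyclic] using hG
  have h3 := three_le_cycle_ncard hc
  have hconn := fun v (hv : v ∈ c.support) => cycle_diff_connected hc hv
  set C : Set V := {x | x ∈ c.support} with hC
  have hB : TightBramble G {S | ∃ v ∈ C, S = C \ {v}} := by
    refine ⟨?_, ?_, ?_⟩
    · rintro _ ⟨v, hv, rfl⟩
      exact hconn v hv
    · rintro _ ⟨v, hv, rfl⟩
      rw [Set.ncard_sdiff_singleton_of_mem hv]
      omega
    · rintro _ ⟨v, hv, rfl⟩ _ ⟨w, hw, rfl⟩ -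
      left
      obtain ⟨x, hx, hxn⟩ := Set.exists_mem_notMem_of_ncard_lt_ncard (s := {v, w}) (t := C)
        (by have := Set.ncard_insert_le v {w}; rw [Set.ncard_singleton] at this; omega)
      simp only [Set.mem_insert_iff, Set.mem_singleton_iff, not_or] at hxn
      exact ⟨x, ⟨hx, hxn.1⟩, ⟨hx, hxn.2⟩⟩
  refine ⟨_, hB, le_antisymm ?_ ?_⟩
  · obtain ⟨a, ha, b, hb, hab⟩ := (Set.one_lt_ncard_iff_nontrivial (s := C)).1 (by omega)
    have hcov : IsCover {S | ∃ v ∈ C, S = C \ {v}} {a, b} := by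
      rintro _ ⟨v, -, rfl⟩
      by_cases hav : a = v
      · exact ⟨b, by simp, hb, fun h => hab (hav.trans h.symm)⟩
      · exact ⟨a, by simp, ha, hav⟩
    simpa [Set.ncard_pair hab] using brambleOrder_le hcov
  · obtain ⟨S, hS, hcard⟩ := exists_cover_ncard_eq hB.nonempty
    rw [← hcard]
    -- A cover has a vertex `x` in `C`, and then a second one in `C \ {x}`.
    obtain ⟨x, hxS, hx, -⟩ := hS _ ⟨u, c.start_mem_support, rfl⟩
    obtain ⟨y, hyS, -, hyx⟩ := hS _ ⟨x, hx, rfl⟩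
    exact Set.one_lt_ncard_iff_nontrivial.2 ⟨x, hxS, y, hyS, fun h => hyx h.symm⟩

/-- For a finite connected graph with at least one edge, the maximum order
of a tight bramble is `1` iff the graph is a tree; every tight bramble of a tree has
order at most `1`, and every connected graph with a cycle has a tight bramble of
order `2`. -/
theorem bramble_order_one_iff_tree {V : Type} [Fintype V] (G : SimpleGraph V)
    (hconn : G.Connected) (hedge : G.edgeSet.Nonempty) :
    (sSup {n | ∃ B : Set (Set V), TightBramble G B ∧ brambleOrder B = n} = 1 ↔
      G.IsTree) ∧
    (G.IsTree → ∀ B : Set (Set V), TightBramble G B → brambleOrder B ≤ 1) ∧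
    (¬ G.IsAcyclic → ∃ B : Set (Set V), TightBramble G B ∧ brambleOrder B = 2) := by
  have hbdd : BddAbove {n | ∃ B : Set (Set V), TightBramble G B ∧ brambleOrder B = n} := by
    refine ⟨(Set.univ : Set V).ncard, ?_⟩
    rintro _ ⟨B, hB, rfl⟩
    exact brambleOrder_le fun S hS => by simpa using hB.nonempty S hS
  refine ⟨⟨fun h => ⟨hconn, ?_⟩, fun hG => le_antisymm ?_ ?_⟩,
    fun hG B hB => tree_brambleOrder_le_one hG hB, exists_bramble_order_two⟩
  · by_contra hG
    have := le_csSup hbdd (exists_bramble_order_two hG)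
    omega
  · refine csSup_le ⟨1, exists_bramble_order_one hconn hedge⟩ ?_
    rintro _ ⟨B, hB, rfl⟩
    exact tree_brambleOrder_le_one hG hB
  · exact le_csSup hbdd (exists_bramble_order_one hconn hedge)
end

section
/- Let B be a tight bramble of a finite simple graph G and let S1 and S2 be two covers of B. If S ⊊ V(G) separates S1 from S2 in G (that is, every path of G with one endpoint in S1 and the other in S2 meets S), then S is a cover of B. -/
open SimpleGraph

/-- If `S1` and `S2` are covers of a tight bramble `B` and `S ⊊ V(G)`
separates `S1` from `S2` (every path with one endpoint in `S1` and the other in `S2`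
meets `S`), then `S` is a cover of `B`. -/
theorem bramble_separation {V : Type} [Fintype V] (G : SimpleGraph V)
    (B : Set (Set V)) (hB : TightBramble G B) (S1 S2 S : Set V)
    (h1 : IsCover B S1) (h2 : IsCover B S2) (hS : S ⊂ Set.univ)
    (hsep : ∀ a ∈ S1, ∀ b ∈ S2, ∀ p : G.Walk a b, p.IsPath →
      ∃ v ∈ p.support, v ∈ S) :
    IsCover B S := by
  intro B0 hB0
  obtain ⟨a, ha1, ha⟩ := h1 B0 hB0
  obtain ⟨b, hb2, hb⟩ := h2 B0 hB0
  obtain ⟨p, hp⟩ := (hB.1 B0 hB0).exists_isPath ⟨a, ha⟩ ⟨b, hb⟩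
  -- The image in `G` of a path of the induced subgraph on `B0` stays inside `B0`.
  let f : G.induce B0 ↪g G := Embedding.induce B0
  obtain ⟨v, hv, hvS⟩ := hsep a ha1 b hb2 (p.map f.toHom)
    (hp.map f.injective)
  obtain ⟨w, -, rfl⟩ := List.mem_map.1 ((Walk.support_map f.toHom p) ▸ hv)
  exact ⟨w.1, hvS, w.2⟩
end

section
/- Let G be a finite simple graph having a full loose tree-decomposition of width k. Then there exists a finite tree T such that G is a minor of the Cartesian product graph T□K_k; in particular ctp(G) ≤ k. -/
/-!
The tree of the given full loose tree-decomposition `(T, χ)` itself works.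

Crossing a tree-edge `tt'` of a full decomposition exchanges a single vertex `x` of `χ t` for a
single vertex `x'` of `χ t'`. The vertices of `G` are coloured with `Fin k` so that the colouring
is injective on every bag and so that the vertices exchanged along a tree-edge always receive the
same colour (`exists_coloring`). Such a colouring is obtained by transporting an injective
colouring of one bag along the tree by the transpositions `(x x')`; as there are no cycles, the
transport is consistent (`exists_potential`), and since a transposition fixes `χ t ∩ χ t'`, the
colour of a vertex does not vary along its (connected) trace.

A vertex `v` of `G` is then modelled by `trace(v) × {colour of v}`. These sets are connected, and
they are disjoint by injectivity on bags. Two vertices that share a bag `χ t` have adjacent branch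
sets because the copy of `K_k` over `t` is complete. An edge of `G` whose ends share no bag is
marginal for some tree-edge `tt'`, so its ends are exactly the two vertices exchanged there; they
have the same colour `i`, and `(t, i)` is adjacent to `(t', i)`.
-/

open SimpleGraph

/-- A function that is unchanged along every edge of a connected graph is constant. -/
lemma eq_of_connected {α β : Type} {H : SimpleGraph α} (hH : H.Connected) (f : α → β)
    (hf : ∀ a b, H.Adj a b → f a = f b) (a b : α) : f a = f b := by
  obtain ⟨p⟩ := hH.preconnected a b
  induction p with
  | nil => rfl
  | cons h _ ih => exact (hf _ _ h).trans ih

/-- The product of the labels `σ a b` of the steps of a walk, the first step being the rightmost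
factor. -/
def walkProd {α M : Type} [Group M] {H : SimpleGraph α} (σ : α → α → M) :
    {a b : α} → H.Walk a b → M
  | _, _, .nil => 1
  | a, _, .cons (v := c) _ p => walkProd σ p * σ a c

lemma walkProd_concat {α M : Type} [Group M] {H : SimpleGraph α} (σ : α → α → M)
    {a b c : α} (p : H.Walk a b) (h : H.Adj b c) :
    walkProd σ (p.concat h) = σ b c * walkProd σ p := by
  induction p with
  | nil => simp [walkProd, SimpleGraph.Walk.concat_nil]
  | cons h' p ih => rw [SimpleGraph.Walk.concat_cons, walkProd, ih, walkProd, mul_assoc]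

/-- Edge labels of a tree with values in a group, inverted when an edge is reversed, are
differences of a potential on the vertices. -/
lemma exists_potential {α M : Type} [Group M] {T : SimpleGraph α} (hT : T.IsTree)
    (σ : α → α → M) (hσ : ∀ a b, T.Adj a b → σ a b * σ b a = 1) :
    ∃ g : α → M, ∀ a b, T.Adj a b → g b = σ a b * g a := by
  obtain ⟨r⟩ := hT.connected.nonempty
  choose P hP _ using fun a => hT.existsUnique_path r a
  refine ⟨fun a => walkProd σ (P a), fun a b hab => ?_⟩
  -- One of the two paths from `r` extends the other by the edge `ab`.
  by_cases ha : a ∈ (P b).support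
  · beta_reduce
    rw [hT.isAcyclic.path_concat (hP a) (hP b) hab ha, walkProd_concat]
  · have hb := hT.isAcyclic.mem_support_of_ne_mem_support_of_adj_of_isPath (hP a) (hP b) hab ha
    beta_reduce
    rw [hT.isAcyclic.path_concat (hP b) (hP a) hab.symm hb, walkProd_concat, ← mul_assoc,
      hσ a b hab, one_mul]

/-- A full loose tree-decomposition of width `k` admits a `k`-colouring of the vertices that is
injective on bags and gives the same colour to the two vertices exchanged along a tree-edge. -/
lemma exists_coloring {V τ : Type} [Finite V] (G : SimpleGraph V) (k : ℕ) (hk : 1 ≤ k)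
    (T : SimpleGraph τ) (χ : τ → Set V) (h : IsFullLTD G T χ k) :
    ∃ c : V → Fin k, (∀ t, Set.InjOn c (χ t)) ∧
      ∀ t t', T.Adj t t' → ∀ x ∈ χ t \ χ t', ∀ x' ∈ χ t' \ χ t, c x = c x' := by
  classical
  obtain ⟨⟨-, hT, htr, -, -⟩, hcard, hfull⟩ := h
  obtain ⟨r⟩ := hT.connected.nonempty
  have hd : ∀ t t', ∃ x, T.Adj t t' → χ t \ χ t' = {x} := by
    intro t t'
    by_cases hA : T.Adj t t'
    · obtain ⟨x, x', hx, hx', hs⟩ := hfull t t' hA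
      refine ⟨x, fun _ => Set.eq_singleton_iff_unique_mem.2 ⟨hx, fun y hy => ?_⟩⟩
      have hy' : y ∈ symmDiff (χ t) (χ t') := Or.inl hy
      rw [hs] at hy'
      rcases hy' with rfl | rfl
      · rfl
      · exact absurd hy.1 hx'.2
    · have : (χ r).Nonempty := by
        rw [← Set.ncard_pos, hcard]; omega
      exact ⟨this.some, fun h => absurd h hA⟩
  choose d hd using hd
  obtain ⟨g, hg⟩ := exists_potential hT (fun t t' => Equiv.swap (d t t') (d t' t))
    (fun a b _ => by rw [Equiv.swap_comm (d b a)]; exact Equiv.swap_mul_self _ _)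
  have hmem : ∀ t t', T.Adj t t' → ∀ v,
      (Equiv.swap (d t t') (d t' t) v ∈ χ t' ↔ v ∈ χ t) := by
    intro t t' hA v
    have h1 := hd t t' hA
    have h2 := hd t' t hA.symm
    have e1 : d t t' ∈ χ t \ χ t' := by rw [h1]; rfl
    have e2 : d t' t ∈ χ t' \ χ t := by rw [h2]; rfl
    by_cases hv1 : v = d t t'
    · subst hv1; simp [Equiv.swap_apply_left, e1.1, e2.1]
    by_cases hv2 : v = d t' t
    · subst hv2; simp [Equiv.swap_apply_right, e1.2, e2.2]
    rw [Equiv.swap_apply_of_ne_of_ne hv1 hv2]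
    constructor <;> intro hv <;> by_contra hn
    · exact hv2 (h2.subset ⟨hv, hn⟩)
    · exact hv1 (h1.subset ⟨hv, hn⟩)
  -- All bags are pulled back by the potential to one and the same set of `k` vertices.
  have hB : ∀ t, g t ⁻¹' χ t = g r ⁻¹' χ r := fun t =>
    eq_of_connected hT.connected (fun t => g t ⁻¹' χ t) (fun a b hab => by
      ext v
      simp only [Set.mem_preimage, hg a b hab, Equiv.Perm.mul_apply]
      exact (hmem a b hab _).symm) t r
  have : Nonempty (Fin k) := ⟨⟨0, hk⟩⟩
  obtain ⟨b, -, hb⟩ := (Set.toFinite (g r ⁻¹' χ r)).exists_injOn_of_encard_le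
    (t := (Set.univ : Set (Fin k))) (by
      rw [← (Set.toFinite (g r ⁻¹' χ r)).cast_ncard_eq,
        Set.ncard_preimage_of_injective_subset_range (g r).injective (by simp), hcard]
      simp)
  -- The colour `b ((g t)⁻¹ v)` is the same for all `t` in the trace of `v`.
  have hconst : ∀ v t t', v ∈ χ t → v ∈ χ t' → b ((g t)⁻¹ v) = b ((g t')⁻¹ v) := by
    intro v t t' ht ht'
    refine eq_of_connected (htr v).2 (fun s => b ((g s.1)⁻¹ v)) ?_ ⟨t, ht⟩ ⟨t', ht'⟩
    rintro ⟨s, hs⟩ ⟨s', hs'⟩ hA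
    have hA : T.Adj s s' := hA
    have e1 : d s s' ∈ χ s \ χ s' := by rw [hd s s' hA]; rfl
    have e2 : d s' s ∈ χ s' \ χ s := by rw [hd s' s hA.symm]; rfl
    have n1 : v ≠ d s s' := fun h => e1.2 (h ▸ hs')
    have n2 : v ≠ d s' s := fun h => e2.2 (h ▸ hs)
    simp [hg s s' hA, mul_inv_rev, Equiv.swap_inv, Equiv.swap_apply_of_ne_of_ne n1 n2]
  choose t₀ ht₀ using fun v => (htr v).1
  refine ⟨fun v => b ((g (t₀ v))⁻¹ v), fun t x hx y hy hxy => ?_, fun t t' hA x hx x' hx' => ?_⟩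
  · simp only [hconst x _ t (ht₀ x) hx, hconst y _ t (ht₀ y) hy] at hxy
    refine (g t)⁻¹.injective (hb ?_ ?_ hxy)
    · rw [← hB t]; simpa using hx
    · rw [← hB t]; simpa using hy
  · simp only [hconst x _ t (ht₀ x) hx.1, hconst x' _ t' (ht₀ x') hx'.1, hg t t' hA]
    rw [hd t t' hA] at hx
    rw [hd t' t hA.symm] at hx'
    obtain rfl : x = _ := hx
    obtain rfl : x' = _ := hx'
    simp [mul_inv_rev, Equiv.swap_inv]

/-- If `G` has a full loose tree-decomposition of width `k`, then `G` is a
minor of `T □ K_k` for some finite tree `T`; in particular `ctp G ≤ k`. -/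
theorem full_ltd_implies_minor_boxProd {V τ0 : Type} [Fintype V] (G : SimpleGraph V)
    (k : ℕ) (hk : 1 ≤ k) (T0 : SimpleGraph τ0) (χ0 : τ0 → Set V)
    (hfull : IsFullLTD G T0 χ0 k) :
    (∃ (τ : Type) (T : SimpleGraph τ), Finite τ ∧ T.IsTree ∧
      IsMinor G (T.boxProd (⊤ : SimpleGraph (Fin k)))) ∧ ctp G ≤ k := by
  have key : ∃ (τ : Type) (T : SimpleGraph τ), Finite τ ∧ T.IsTree ∧
      IsMinor G (T.boxProd (⊤ : SimpleGraph (Fin k))) := by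
    obtain ⟨c, hinj, hswap⟩ := exists_coloring G k hk T0 χ0 hfull
    obtain ⟨⟨hfin, hT, htr, hedge, -⟩, -, -⟩ := hfull
    refine ⟨τ0, T0, hfin, hT, fun v => {p | v ∈ χ0 p.1 ∧ p.2 = c v}, fun v => ?_, fun v => ?_,
      fun x y hxy => ?_, fun x y hxy => ?_⟩
    · obtain ⟨t, ht⟩ := (htr v).1
      exact ⟨(t, c v), ht, rfl⟩
    · let f : T0.induce {t | v ∈ χ0 t} →g
          (T0.boxProd (⊤ : SimpleGraph (Fin k))).induce {p | v ∈ χ0 p.1 ∧ p.2 = c v} :=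
        { toFun := fun t => ⟨(t.1, c v), t.2, rfl⟩
          map_rel' := fun {a b} hab => by
            have hab : T0.Adj a.1 b.1 := hab
            simp [hab] }
      refine SimpleGraph.Connected.map f ?_ (htr v).2
      rintro ⟨⟨t, i⟩, ht, hi⟩
      exact ⟨⟨t, ht⟩, Subtype.ext (Prod.ext rfl hi.symm)⟩
    · rw [Set.disjoint_left]
      rintro ⟨t, i⟩ ⟨hx, hi⟩ ⟨hy, hi'⟩
      exact hxy (hinj t hx hy (hi.symm.trans hi'))
    · have same : ∀ t, x ∈ χ0 t → y ∈ χ0 t → ∃ a ∈ {p : τ0 × Fin k | x ∈ χ0 p.1 ∧ p.2 = c x},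
          ∃ b ∈ {p : τ0 × Fin k | y ∈ χ0 p.1 ∧ p.2 = c y},
          (T0.boxProd (⊤ : SimpleGraph (Fin k))).Adj a b := fun t hx hy =>
        ⟨(t, c x), ⟨hx, rfl⟩, (t, c y), ⟨hy, rfl⟩, by
          simpa [SimpleGraph.boxProd_adj] using fun h => hxy.ne (hinj t hx hy h)⟩
      have cross : ∀ t t', T0.Adj t t' → x ∈ χ0 t \ χ0 t' → y ∈ χ0 t' \ χ0 t →
          ∃ a ∈ {p : τ0 × Fin k | x ∈ χ0 p.1 ∧ p.2 = c x},
          ∃ b ∈ {p : τ0 × Fin k | y ∈ χ0 p.1 ∧ p.2 = c y},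
          (T0.boxProd (⊤ : SimpleGraph (Fin k))).Adj a b := fun t t' hA hx hy =>
        ⟨(t, c x), ⟨hx.1, rfl⟩, (t', c y), ⟨hy.1, rfl⟩, by
          simp [SimpleGraph.boxProd_adj, hA, hswap t t' hA x hx y hy]⟩
      obtain ⟨t, t', hA, hx, hy⟩ := hedge x y hxy
      by_cases h1 : x ∈ χ0 t ∧ y ∈ χ0 t
      · exact same t h1.1 h1.2
      by_cases h2 : x ∈ χ0 t' ∧ y ∈ χ0 t'
      · exact same t' h2.1 h2.2
      rcases hx with hx | hx
      · have hy' : y ∈ χ0 t' := hy.resolve_left fun h => h1 ⟨hx, h⟩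
        exact cross t t' hA ⟨hx, fun h => h2 ⟨h, hy'⟩⟩ ⟨hy', fun h => h1 ⟨hx, h⟩⟩
      · have hy' : y ∈ χ0 t := hy.resolve_right fun h => h2 ⟨hx, h⟩
        exact cross t' t hA.symm ⟨hx, fun h => h1 ⟨h, hy'⟩⟩ ⟨hy', fun h => h2 ⟨hx, h⟩⟩
  exact ⟨key, Nat.sInf_le ⟨hk, key⟩⟩
end

section
/- Let G be a finite simple graph, k ≥ 1 an integer, and suppose G has no tight bramble of order larger than k. Then for every tight bramble B of G there exists a B-admissible loose tree-decomposition of G, i.e. a loose tree-decomposition (T, χ) of G such that for every node t of T with |χ(t)| > k, the bag χ(t) is not a cover of B. -/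
/-!
The proof is by downward induction on the tight bramble `B`: the claim is assumed for all tight
brambles strictly containing `B`. Let `X` be a cover of `B` of minimum size, so `|X| ≤ k`. Loose
tree-decompositions of the graphs `G[X ∪ C]`, for the components `C` of `G - X`, can be glued along
a common bag `X` (`AdmissibleOn.glue`, `admissibleOn_univ`), so one component `C` may be treated at
a time.

* If `C = {c}`, the bags `X` and `X - a + c` with `a ∈ X` suffice; the only possible marginal edge
  is `ac` (`admissibleOn_singleton`).
* If `C` does not touch some `D ∈ B`, at most one edge joins `C` to `D`, and the bags `X` and
  `(X \ D) ∪ C` suffice, since the second one misses `D` (`admissibleOn_of_not_touching`).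
* Otherwise `B ∪ {C}` is a tight bramble, strictly larger than `B` since `X` covers `B` but not `C`.
  Take a decomposition `(T, χ)` admissible for it. If it is admissible for `B` there is nothing left
  to prove. If not, some bag `χ s` covers `B` and avoids `C`. Restrict all bags to `X ∪ C` and add
  each `x ∈ X` to all bags on the tree paths from its trace to `s` (`admissibleOn_of_reroute`).
  The bag at `s` becomes `X`. The minimality of `X` shows that no bag grows, so Menger's theorem is
  not needed; no marginal edge is created because traces of adjacent vertices intersect or are
  joined by a tree-edge; and a bag that newly meets `D ∈ B` separates two nodes of the connected
  trace of `D`, hence met `D` before.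
-/


open SimpleGraph

/-! ### Connectivity inside a vertex set -/

/-- Vertices `a` and `b` are joined by a walk of `G` staying inside `S`. -/
def WalkJoined {α : Type} (G : SimpleGraph α) (S : Set α) (a b : α) : Prop :=
  ∃ p : G.Walk a b, ∀ z ∈ p.support, z ∈ S

namespace WalkJoined

variable {α : Type} {G : SimpleGraph α} {S S' : Set α} {a b c : α}

lemma refl (h : a ∈ S) : WalkJoined G S a a := ⟨.nil, by simpa using h⟩

lemma symm (h : WalkJoined G S a b) : WalkJoined G S b a := by
  obtain ⟨p, hp⟩ := h
  exact ⟨p.reverse, by simpa using hp⟩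

lemma trans (h : WalkJoined G S a b) (h' : WalkJoined G S b c) : WalkJoined G S a c := by
  obtain ⟨p, hp⟩ := h
  obtain ⟨q, hq⟩ := h'
  refine ⟨p.append q, fun z hz => ?_⟩
  rcases (Walk.mem_support_append_iff p q).1 hz with hz | hz
  exacts [hp z hz, hq z hz]

lemma of_adj (h : G.Adj a b) (ha : a ∈ S) (hb : b ∈ S) : WalkJoined G S a b :=
  ⟨h.toWalk, by simp [ha, hb]⟩

lemma mono (h : WalkJoined G S a b) (hS : S ⊆ S') : WalkJoined G S' a b := by
  obtain ⟨p, hp⟩ := h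
  exact ⟨p, fun z hz => hS (hp z hz)⟩

lemma right_mem (h : WalkJoined G S a b) : b ∈ S := by
  obtain ⟨p, hp⟩ := h
  exact hp _ p.end_mem_support

lemma map {β : Type} {G' : SimpleGraph β} (f : G →g G') {S' : Set β} (h : WalkJoined G S a b)
    (hS : ∀ z ∈ S, f z ∈ S') : WalkJoined G' S' (f a) (f b) := by
  obtain ⟨p, hp⟩ := h
  refine ⟨p.map f, fun z hz => ?_⟩
  rw [Walk.support_map, List.mem_map] at hz
  obtain ⟨y, hy, rfl⟩ := hz
  exact hS _ (hp y hy)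

end WalkJoined

lemma connectedIn_iff {α : Type} {G : SimpleGraph α} {S : Set α} :
    ConnectedIn G S ↔ S.Nonempty ∧ ∀ a ∈ S, ∀ b ∈ S, WalkJoined G S a b := by
  constructor
  · intro h
    refine ⟨Set.nonempty_coe_sort.1 h.nonempty, fun a ha b hb => ?_⟩
    obtain ⟨p⟩ := h.preconnected ⟨a, ha⟩ ⟨b, hb⟩
    have : WalkJoined (G.induce S) Set.univ ⟨a, ha⟩ ⟨b, hb⟩ := ⟨p, fun _ _ => trivial⟩
    exact this.map (Embedding.induce S).toHom fun z _ => z.2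
  · rintro ⟨⟨x, hx⟩, h⟩
    have : Nonempty S := ⟨⟨x, hx⟩⟩
    refine ⟨fun a b => ?_⟩
    obtain ⟨p, hp⟩ := h a a.2 b b.2
    exact ⟨p.induce S hp⟩

/-! ### Separation in trees -/

/-- The node `t` separates `u` from `s` in `T` (the cases `t = u` and `t = s` are allowed).
In a tree this says that `t` lies on the path from `u` to `s`. -/
def Separates {τ : Type} (T : SimpleGraph τ) (t u s : τ) : Prop :=
  ∀ p : T.Walk u s, t ∈ p.support

section Tree

variable {τ : Type} {T : SimpleGraph τ} {t t₁ t₂ u s : τ}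

lemma separates_of_path (hT : T.IsTree) {p : T.Walk u s} (hp : p.IsPath)
    (ht : t ∈ p.support) : Separates T t u s := by
  classical
  intro q
  have := (hT.isAcyclic.subsingleton_path u s).elim ⟨p, hp⟩ q.toPath
  refine q.support_toPath_subset_support ?_
  rw [← this]
  exact ht

/-- An edge of a tree points towards `s` in one of its two directions. -/
lemma separates_of_adj (hT : T.IsTree) (h : T.Adj t₁ t₂) (s : τ) :
    Separates T t₂ t₁ s ∨ Separates T t₁ t₂ s := by
  obtain ⟨p, hp⟩ := hT.connected.exists_isPath t₁ s
  by_cases h2 : t₂ ∈ p.support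
  · exact .inl (separates_of_path hT hp h2)
  · refine .inr (separates_of_path hT (p := .cons h.symm p) (hp.cons h2) ?_)
    simp

/-- If `t₁` is on the path from `u` to `s` but its neighbour `t₂` is not, then the path from `u`
to `t₂` also goes through `t₁`. -/
lemma separates_of_adj_of_not_separates (hT : T.IsTree) (h : T.Adj t₁ t₂)
    (h1 : Separates T t₁ u s) (h2 : ¬ Separates T t₂ u s) : Separates T t₁ u t₂ := by
  classical
  unfold Separates at h2
  push Not at h2
  obtain ⟨q, hq⟩ := h2
  have h3 : t₂ ∉ (q.takeUntil t₁ (h1 q)).bypass.support := fun hm =>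
    hq (q.support_takeUntil_subset_support _ (Walk.support_bypass_subset_support _ hm))
  refine separates_of_path hT (p := (q.takeUntil t₁ (h1 q)).bypass.concat h)
    ((Walk.bypass_isPath _).concat h3 h) ?_
  simp [Walk.support_concat]

lemma Separates.trans (h1 : Separates T t₁ u s) (h2 : Separates T t₂ t₁ s) :
    Separates T t₂ u s := by
  classical
  intro p
  exact p.support_dropUntil_subset_support (h1 p) (h2 _)

/-- The union of the tree paths from the nodes of `U` to `s` is connected. -/
lemma walkJoined_separates (hT : T.IsTree) (U : Set τ) (hu : u ∈ U) (h : Separates T t u s) :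
    WalkJoined T {t | ∃ u ∈ U, Separates T t u s} t s := by
  classical
  obtain ⟨p, hp⟩ := hT.connected.exists_isPath u s
  exact ⟨p.dropUntil t (h p), fun z hz =>
    ⟨u, hu, separates_of_path hT hp (p.support_dropUntil_subset_support _ hz)⟩⟩

end Tree

/-! ### Loose tree-decompositions of induced subgraphs -/

lemma mem_marginalEdges {V : Type} {G : SimpleGraph V} {A B : Set V} {e : Sym2 V} :
    e ∈ marginalEdges G A B ↔
      ∃ x y, e = s(x, y) ∧ G.Adj x y ∧ (x ∈ A ∧ x ∉ B) ∧ (y ∈ B ∧ y ∉ A) := by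
  constructor
  · rintro ⟨x, y, rfl, h, hx, hy, h1, h2⟩
    by_cases hxA : x ∈ A
    · have hyA : y ∉ A := fun hh => h1 ⟨hxA, hh⟩
      have hyB : y ∈ B := hy.resolve_left hyA
      exact ⟨x, y, rfl, h, ⟨hxA, fun hh => h2 ⟨hh, hyB⟩⟩, hyB, hyA⟩
    · have hxB : x ∈ B := hx.resolve_left hxA
      have hyB : y ∉ B := fun hh => h2 ⟨hxB, hh⟩
      exact ⟨y, x, Sym2.eq_swap, h.symm, ⟨hy.resolve_right hyB, hyB⟩, hxB, hxA⟩
  · rintro ⟨x, y, rfl, h, ⟨hx, hx'⟩, hy, hy'⟩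
    exact ⟨x, y, rfl, h, .inl hx, .inr hy, fun hh => hy' hh.2, fun hh => hx' hh.1⟩

/-- `(T, χ)` is a loose tree-decomposition of the induced subgraph `G[H]`, with bags kept as sets
of vertices of `G` and connectivity of traces phrased with walks. -/
structure IsLTDOn {V τ : Type} (G : SimpleGraph V) (H : Set V) (T : SimpleGraph τ)
    (χ : τ → Set V) : Prop where
  finite : Finite τ
  tree : T.IsTree
  bag_subset : ∀ t, χ t ⊆ H
  trace_nonempty : ∀ x ∈ H, ∃ t, x ∈ χ t
  trace_joined : ∀ x s t, x ∈ χ s → x ∈ χ t → WalkJoined T {t | x ∈ χ t} s t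
  edge : ∀ x ∈ H, ∀ y ∈ H, G.Adj x y →
    ∃ t₁ t₂, T.Adj t₁ t₂ ∧ x ∈ χ t₁ ∪ χ t₂ ∧ y ∈ χ t₁ ∪ χ t₂
  marginal : ∀ t₁ t₂, T.Adj t₁ t₂ → (marginalEdges G (χ t₁) (χ t₂)).Subsingleton

lemma isLTDOn_univ_iff {V τ : Type} {G : SimpleGraph V} {T : SimpleGraph τ} {χ : τ → Set V} :
    IsLTDOn G Set.univ T χ ↔ IsLTD G T χ := by
  constructor
  · rintro ⟨h1, h2, -, h4, h5, h6, h7⟩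
    refine ⟨h1, h2, fun x => ⟨h4 x trivial, connectedIn_iff.2 ⟨h4 x trivial, ?_⟩⟩,
      fun x y => h6 x trivial y trivial, h7⟩
    exact fun s hs t ht => h5 x s t hs ht
  · rintro ⟨h1, h2, h3, h4, h5⟩
    exact ⟨h1, h2, fun _ => Set.subset_univ _, fun x _ => (h3 x).1,
      fun x s t hs ht => (connectedIn_iff.1 (h3 x).2).2 s hs t ht,
      fun x _ y _ => h4 x y, h5⟩

/-- The traces of the vertices of a connected set have a connected union, since the traces of
adjacent vertices intersect or are joined by a tree-edge. -/
lemma IsLTDOn.joined_traces {V τ : Type} {G : SimpleGraph V} {T : SimpleGraph τ}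
    {χ : τ → Set V} (h : IsLTDOn G Set.univ T χ) {D : Set V} {v w : V}
    (hvw : WalkJoined G D v w) {u s : τ} (hu : v ∈ χ u) (hs : w ∈ χ s) :
    WalkJoined T {t | ∃ y ∈ D, y ∈ χ t} u s := by
  obtain ⟨p, hp⟩ := hvw
  induction p generalizing u with
  | nil =>
    exact (h.trace_joined _ _ _ hu hs).mono fun t ht => ⟨_, hp _ (by simp), ht⟩
  | @cons a b c hab p ih =>
    have ha : a ∈ D := hp _ (by simp)
    have hb : b ∈ D := hp _ (by simp)
    have key : ∃ t₁ t₂, a ∈ χ t₁ ∧ b ∈ χ t₂ ∧ (t₁ = t₂ ∨ T.Adj t₁ t₂) := by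
      obtain ⟨t₁, t₂, ht, h1 | h1, h2 | h2⟩ := h.edge a trivial b trivial hab
      exacts [⟨_, _, h1, h2, .inl rfl⟩, ⟨_, _, h1, h2, .inr ht⟩, ⟨_, _, h1, h2, .inr ht.symm⟩,
        ⟨_, _, h1, h2, .inl rfl⟩]
    obtain ⟨t₁, t₂, h1, h2, h12⟩ := key
    have j1 : WalkJoined T {t | ∃ y ∈ D, y ∈ χ t} u t₁ :=
      (h.trace_joined _ _ _ hu h1).mono fun t ht => ⟨_, ha, ht⟩
    have j2 : WalkJoined T {t | ∃ y ∈ D, y ∈ χ t} t₁ t₂ := by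
      rcases h12 with rfl | h12
      · exact .refl ⟨_, ha, h1⟩
      · exact .of_adj h12 ⟨_, ha, h1⟩ ⟨_, hb, h2⟩
    exact (j1.trans j2).trans (ih h2 hs fun z hz => hp z (by simp [hz]))

/-- A bag separating two bags that meet a connected set `D` meets `D` as well. -/
lemma IsLTDOn.exists_mem_of_separates {V τ : Type} {G : SimpleGraph V} {T : SimpleGraph τ}
    {χ : τ → Set V} (h : IsLTDOn G Set.univ T χ) {D : Set V} {v w : V}
    (hvw : WalkJoined G D v w) {u s t : τ} (hu : v ∈ χ u) (hs : w ∈ χ s)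
    (ht : Separates T t u s) : ∃ y ∈ D, y ∈ χ t := by
  obtain ⟨p, hp⟩ := h.joined_traces hvw hu hs
  exact hp t (ht p)

/-! ### Gluing, and decompositions with two bags -/

/-- `G[H]` has a loose tree-decomposition with `X` among its bags, in which no bag with more than
`k` vertices covers `B`. -/
def AdmissibleOn {V : Type} (G : SimpleGraph V) (k : ℕ) (B : Set (Set V)) (X H : Set V) : Prop :=
  ∃ (τ : Type) (T : SimpleGraph τ) (χ : τ → Set V) (s : τ), IsLTDOn G H T χ ∧ χ s = X ∧
    ∀ t, k < (χ t).ncard → ¬ IsCover B (χ t)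

lemma isTree_sum_sup_edge {τ₁ τ₂ : Type} [Finite τ₁] [Finite τ₂] {T₁ : SimpleGraph τ₁}
    {T₂ : SimpleGraph τ₂} (h₁ : T₁.IsTree) (h₂ : T₂.IsTree) (s₁ : τ₁) (s₂ : τ₂) :
    ((T₁ ⊕g T₂) ⊔ edge (.inl s₁) (.inr s₂)).IsTree := by
  have hc := h₁.connected.sum_sup_edge h₂.connected (v := s₁) (w := s₂)
  refine isTree_iff_connected_and_card.2
    ⟨hc, le_antisymm ?_ hc.card_vert_le_card_edgeSet_add_one⟩
  have e1 := (isTree_iff_connected_and_card.1 h₁).2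
  have e2 := (isTree_iff_connected_and_card.1 h₂).2
  have e3 : Nat.card (T₁ ⊕g T₂).edgeSet = Nat.card T₁.edgeSet + Nat.card T₂.edgeSet := by
    rw [Nat.card_congr edgeSetSumEquiv, Nat.card_sum]
  have e4 : Nat.card ((T₁ ⊕g T₂) ⊔ edge (.inl s₁) (.inr s₂)).edgeSet ≤
      Nat.card (T₁ ⊕g T₂).edgeSet + 1 := by
    rw [Nat.card_coe_set_eq, Nat.card_coe_set_eq]
    refine le_trans (Set.ncard_le_ncard ?_ (Set.toFinite _))
      (Set.ncard_insert_le s(Sum.inl s₁, Sum.inr s₂) _)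
    rw [edgeSet_sup, edgeSet_edge]
    rintro e (he | he)
    · exact .inr he
    · exact .inl he.1
  rw [Nat.card_sum]
  omega

/-- Decompositions of two subgraphs that overlap in `X` and have no other edge between them are
glued along their bags `X`. -/
lemma AdmissibleOn.glue {V : Type} {G : SimpleGraph V} {k : ℕ} {B : Set (Set V)}
    {X H₁ H₂ : Set V} (h₁ : AdmissibleOn G k B X H₁) (h₂ : AdmissibleOn G k B X H₂)
    (hX : H₁ ∩ H₂ ⊆ X) (hE : ∀ x ∈ H₁, x ∉ X → ∀ y ∈ H₂, y ∉ X → ¬ G.Adj x y) :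
    AdmissibleOn G k B X (H₁ ∪ H₂) := by
  obtain ⟨τ₁, T₁, χ₁, s₁, d₁, hs₁, a₁⟩ := h₁
  obtain ⟨τ₂, T₂, χ₂, s₂, d₂, hs₂, a₂⟩ := h₂
  have := d₁.finite
  have := d₂.finite
  set T := (T₁ ⊕g T₂) ⊔ edge (.inl s₁) (.inr s₂) with hTdef
  have adjl : ∀ {a b}, T₁.Adj a b → T.Adj (.inl a) (.inl b) := fun h => by simp [hTdef, h]
  have adjr : ∀ {a b}, T₂.Adj a b → T.Adj (.inr a) (.inr b) := fun h => by simp [hTdef, h]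
  have adjs : T.Adj (.inl s₁) (.inr s₂) := by simp [hTdef, edge_adj]
  have hom₁ : ∃ f : T₁ →g T, ∀ a, f a = .inl a := ⟨⟨Sum.inl, adjl⟩, fun _ => rfl⟩
  have hom₂ : ∃ f : T₂ →g T, ∀ a, f a = .inr a := ⟨⟨Sum.inr, adjr⟩, fun _ => rfl⟩
  obtain ⟨f₁, hf₁⟩ := hom₁
  obtain ⟨f₂, hf₂⟩ := hom₂
  have hX₁ : X ⊆ H₁ := hs₁ ▸ d₁.bag_subset s₁
  have hX₂ : X ⊆ H₂ := hs₂ ▸ d₂.bag_subset s₂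
  have jl : ∀ x a b, x ∈ χ₁ a → x ∈ χ₁ b →
      WalkJoined T {t | x ∈ Sum.elim χ₁ χ₂ t} (.inl a) (.inl b) := fun x a b ha hb => by
    have := (d₁.trace_joined x a b ha hb).map f₁ (S' := {t | x ∈ Sum.elim χ₁ χ₂ t})
      fun z hz => by simpa [hf₁] using hz
    simpa [hf₁] using this
  have jr : ∀ x a b, x ∈ χ₂ a → x ∈ χ₂ b →
      WalkJoined T {t | x ∈ Sum.elim χ₁ χ₂ t} (.inr a) (.inr b) := fun x a b ha hb => by
    have := (d₂.trace_joined x a b ha hb).map f₂ (S' := {t | x ∈ Sum.elim χ₁ χ₂ t})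
      fun z hz => by simpa [hf₂] using hz
    simpa [hf₂] using this
  have jlr : ∀ x a b, x ∈ χ₁ a → x ∈ χ₂ b →
      WalkJoined T {t | x ∈ Sum.elim χ₁ χ₂ t} (.inl a) (.inr b) := fun x a b ha hb => by
    have hx : x ∈ X := hX ⟨d₁.bag_subset _ ha, d₂.bag_subset _ hb⟩
    have hx₁ : x ∈ χ₁ s₁ := hs₁ ▸ hx
    have hx₂ : x ∈ χ₂ s₂ := hs₂ ▸ hx
    exact ((jl x a s₁ ha hx₁).trans (.of_adj adjs hx₁ hx₂)).trans (jr x s₂ b hx₂ hb)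
  refine ⟨τ₁ ⊕ τ₂, T, Sum.elim χ₁ χ₂, .inl s₁,
    ⟨inferInstance, isTree_sum_sup_edge d₁.tree d₂.tree s₁ s₂, ?_, ?_, ?_, ?_, ?_⟩, hs₁, ?_⟩
  · rintro (t | t)
    · exact (d₁.bag_subset t).trans Set.subset_union_left
    · exact (d₂.bag_subset t).trans Set.subset_union_right
  · rintro x (hx | hx)
    · obtain ⟨t, ht⟩ := d₁.trace_nonempty x hx
      exact ⟨.inl t, ht⟩
    · obtain ⟨t, ht⟩ := d₂.trace_nonempty x hx
      exact ⟨.inr t, ht⟩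
  · rintro x (a | a) (b | b) ha hb
    exacts [jl x a b ha hb, jlr x a b ha hb, (jlr x b a hb ha).symm, jr x a b ha hb]
  · have e₁ : ∀ x ∈ H₁, ∀ y ∈ H₁, G.Adj x y → ∃ t₁ t₂, T.Adj t₁ t₂ ∧
        x ∈ Sum.elim χ₁ χ₂ t₁ ∪ Sum.elim χ₁ χ₂ t₂ ∧
        y ∈ Sum.elim χ₁ χ₂ t₁ ∪ Sum.elim χ₁ χ₂ t₂ := fun x hx y hy h => by
      obtain ⟨t₁, t₂, ht, h1, h2⟩ := d₁.edge x hx y hy h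
      exact ⟨_, _, adjl ht, h1, h2⟩
    have e₂ : ∀ x ∈ H₂, ∀ y ∈ H₂, G.Adj x y → ∃ t₁ t₂, T.Adj t₁ t₂ ∧
        x ∈ Sum.elim χ₁ χ₂ t₁ ∪ Sum.elim χ₁ χ₂ t₂ ∧
        y ∈ Sum.elim χ₁ χ₂ t₁ ∪ Sum.elim χ₁ χ₂ t₂ := fun x hx y hy h => by
      obtain ⟨t₁, t₂, ht, h1, h2⟩ := d₂.edge x hx y hy h
      exact ⟨_, _, adjr ht, h1, h2⟩
    intro x hx y hy h
    by_cases hxX : x ∈ X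
    · rcases hy with hy | hy
      exacts [e₁ x (hX₁ hxX) y hy h, e₂ x (hX₂ hxX) y hy h]
    · by_cases hyX : y ∈ X
      · rcases hx with hx | hx
        exacts [e₁ x hx y (hX₁ hyX) h, e₂ x hx y (hX₂ hyX) h]
      · rcases hx with hx | hx <;> rcases hy with hy | hy
        · exact e₁ x hx y hy h
        · exact absurd h (hE x hx hxX y hy hyX)
        · exact absurd h.symm (hE y hy hyX x hx hxX)
        · exact e₂ x hx y hy h
  · have hs : ∀ e, e ∉ marginalEdges G X X := fun e he => by
      obtain ⟨x, y, -, -, h1, h2⟩ := mem_marginalEdges.1 he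
      exact h1.2 h1.1
    rintro (a | a) (b | b) hab
    · exact d₁.marginal a b (by simpa [hTdef, edge_adj] using hab)
    · have : a = s₁ ∧ b = s₂ := by simpa [hTdef, edge_adj] using hab
      obtain ⟨rfl, rfl⟩ := this
      simp only [Sum.elim_inl, Sum.elim_inr, hs₁, hs₂]
      exact fun e he => absurd he (hs e)
    · have : a = s₂ ∧ b = s₁ := by
        have : b = s₁ ∧ a = s₂ := by simpa [hTdef, edge_adj] using hab.symm
        exact this.symm
      obtain ⟨rfl, rfl⟩ := this
      simp only [Sum.elim_inl, Sum.elim_inr, hs₁, hs₂]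
      exact fun e he => absurd he (hs e)
    · exact d₂.marginal a b (by simpa [hTdef, edge_adj] using hab)
  · rintro (t | t) ht
    exacts [a₁ t ht, a₂ t ht]

/-- The decomposition with the two adjacent bags `X` and `A`. -/
lemma AdmissibleOn.two_bags {V : Type} {G : SimpleGraph V} {k : ℕ} {B : Set (Set V)}
    {X A : Set V} (hm : (marginalEdges G X A).Subsingleton) (hX : X.ncard ≤ k)
    (hA : k < A.ncard → ¬ IsCover B A) : AdmissibleOn G k B X (X ∪ A) := by
  have hm' : (marginalEdges G A X).Subsingleton := by
    refine hm.anti fun e he => ?_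
    obtain ⟨x, y, rfl, h, h1, h2⟩ := mem_marginalEdges.1 he
    exact mem_marginalEdges.2 ⟨y, x, Sym2.eq_swap, h.symm, h2, h1⟩
  have hadj : ∀ a b : Bool, a ≠ b → (⊤ : SimpleGraph Bool).Adj a b := fun a b h => h
  refine ⟨Bool, ⊤, fun b => cond b A X, false, ⟨inferInstance, ⟨connected_top, ?_⟩, ?_, ?_, ?_,
    ?_, ?_⟩, rfl, ?_⟩
  · exact IsAcyclic.of_card_le_two (by simp)
  · rintro (_ | _)
    exacts [Set.subset_union_left, Set.subset_union_right]
  · rintro x (hx | hx)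
    exacts [⟨false, hx⟩, ⟨true, hx⟩]
  · intro x a b ha hb
    by_cases hab : a = b
    · subst hab
      exact .refl ha
    · exact .of_adj (hadj a b hab) ha hb
  · exact fun x hx y hy _ => ⟨false, true, hadj _ _ (by simp), hx, hy⟩
  · rintro (_ | _) (_ | _) h
    exacts [absurd rfl h.ne, hm, hm', absurd rfl h.ne]
  · rintro (_ | _) h
    exacts [absurd h (not_lt.2 hX), hA h]

/-! ### Rerouting to a minimum cover -/

/-- If a walk starts outside a component `C` of `G - X` and ends in `X`, then its part up to the
first vertex of `X` avoids `C`. -/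
lemma exists_walkJoined_diff {V : Type} {G : SimpleGraph V} {X C D : Set V}
    (hcl : ∀ c ∈ C, ∀ w, w ∉ X → G.Adj c w → w ∈ C) {v w : V} (h : WalkJoined G D v w)
    (hv : v ∉ C) (hw : w ∈ X) : ∃ x ∈ X, WalkJoined G (D \ C) v x := by
  obtain ⟨p, hp⟩ := h
  induction p with
  | nil => exact ⟨_, hw, .refl ⟨hp _ (by simp), hv⟩⟩
  | @cons a b c hab p ih =>
    by_cases ha : a ∈ X
    · exact ⟨a, ha, .refl ⟨hp _ (by simp), hv⟩⟩
    · have hb : b ∉ C := fun hb => hv (hcl b hb a ha hab.symm)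
      obtain ⟨x, hx, hj⟩ := ih hb hw (fun z hz => hp z (by simp [hz]))
      have h1 : WalkJoined G (D \ C) a b :=
        .of_adj hab ⟨hp _ (by simp), hv⟩ ⟨hp _ (by simp), hb⟩
      exact ⟨x, hx, h1.trans hj⟩

/-- The central step. Let `X` be a minimum cover of `B` and `C` a component of `G - X`, and let
`(T, χ)` be admissible for `B ∪ {C}`, with a bag `χ s` that covers `B` and avoids `C`. Restricting
the bags to `X ∪ C` and extending the trace of each `x ∈ X` by the tree paths to `s` gives an
admissible decomposition of `G[X ∪ C]` whose bag at `s` is `X`. Bags do not grow, because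
replacing in `X` the vertices of `X` in the new bag at `t` by `χ t \ C` yields a cover of `B`. -/
lemma admissibleOn_of_reroute {V τ : Type} [Fintype V] {G : SimpleGraph V} {k : ℕ}
    {B : Set (Set V)} {X C : Set V} {T : SimpleGraph τ} {χ : τ → Set V} {s : τ}
    (hB : ∀ S ∈ B, ConnectedIn G S) (hX : IsCover B X)
    (hmin : ∀ Y, IsCover B Y → X.ncard ≤ Y.ncard) (hXk : X.ncard ≤ k) (hCX : Disjoint C X)
    (hcl : ∀ c ∈ C, ∀ w, w ∉ X → G.Adj c w → w ∈ C) (h : IsLTDOn G Set.univ T χ)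
    (hadm : ∀ t, k < (χ t).ncard → ¬ IsCover (insert C B) (χ t))
    (hs : IsCover B (χ s)) (hsC : Disjoint (χ s) C) : AdmissibleOn G k B X (X ∪ C) := by
  have hnX : ∀ c ∈ C, c ∉ X := fun c hc hx => Set.disjoint_left.1 hCX hc hx
  have hnC : ∀ x ∈ X, x ∉ C := fun x hx hc => hnX x hc hx
  -- the vertices of `X` whose extended trace contains `t`
  let E : τ → Set V := fun t => {x | x ∈ X ∧ ∃ u, x ∈ χ u ∧ Separates T t u s}
  let χ' : τ → Set V := fun t => (χ t ∩ C) ∪ E t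
  have hself : ∀ t u : τ, Separates T u u t := fun t u p => p.start_mem_support
  have hEs : ∀ x ∈ X, x ∈ E s := fun x hx => by
    obtain ⟨u, hu⟩ := h.trace_nonempty x trivial
    exact ⟨hx, u, hu, fun p => p.end_mem_support⟩
  have hres : ∀ t, ∀ x ∈ X ∪ C, x ∈ χ t → x ∈ χ' t := by
    rintro t x (hx | hx) hxt
    · exact .inr ⟨hx, t, hxt, hself _ _⟩
    · exact .inl ⟨hxt, hx⟩
  have hC' : ∀ t, ∀ y ∈ C, y ∈ χ' t → y ∈ χ t := by
    rintro t y hy (hyt | hyt)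
    · exact hyt.1
    · exact absurd hyt.1 (hnX y hy)
  have hX' : ∀ t, ∀ x ∈ X, x ∈ χ' t → x ∈ E t := by
    rintro t y hy (hyt | hyt)
    · exact absurd hyt.2 (hnC y hy)
    · exact hyt
  have hsub : ∀ t, χ' t ⊆ X ∪ C := by
    rintro t x (hx | hx)
    exacts [.inr hx.2, .inl hx.1]
  have hcard : ∀ t, (χ' t).ncard ≤ (χ t).ncard := fun t => by
    have hcov : IsCover B ((X \ E t) ∪ (χ t \ C)) := fun D hD => by
      obtain ⟨v, hvs, hvD⟩ := hs D hD
      obtain ⟨w, hwX, hwD⟩ := hX D hD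
      obtain ⟨x, hxX, hj⟩ := exists_walkJoined_diff hcl
        ((connectedIn_iff.1 (hB D hD)).2 v hvD w hwD) (Set.disjoint_left.1 hsC hvs) hwX
      by_cases hxE : x ∈ E t
      · obtain ⟨-, u, hxu, hsep⟩ := hxE
        obtain ⟨y, hy, hyt⟩ := h.exists_mem_of_separates hj.symm hxu hvs hsep
        exact ⟨y, .inr ⟨hyt, hy.2⟩, hy.1⟩
      · exact ⟨x, .inl ⟨hxX, hxE⟩, hj.right_mem.1⟩
    have h1 := (hmin _ hcov).trans (Set.ncard_union_le _ _)
    have h2 : (X \ E t).ncard + (E t).ncard = X.ncard :=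
      Set.ncard_sdiff_add_ncard_of_subset (fun x hx => hx.1) (Set.toFinite _)
    have h3 : (χ t ∩ C).ncard + (χ t \ C).ncard = (χ t).ncard :=
      Set.ncard_inter_add_ncard_sdiff_eq_ncard _ _ (Set.toFinite _)
    have h4 : (χ' t).ncard ≤ (χ t ∩ C).ncard + (E t).ncard := Set.ncard_union_le _ _
    omega
  -- an extended trace is left, along a tree-edge, only in the direction away from `s`
  have hnew : ∀ t₁ t₂, T.Adj t₁ t₂ → ∀ x ∈ X, x ∈ χ' t₁ → x ∉ χ' t₂ → ∀ y ∈ X, y ∈ χ' t₂ →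
      y ∈ χ' t₁ := by
    intro t₁ t₂ ht x hx hx1 hx2 y hy hy2
    obtain ⟨-, u, hu, hsep⟩ := hX' _ x hx hx1
    obtain ⟨-, u', hu', hsep'⟩ := hX' _ y hy hy2
    rcases separates_of_adj h.tree ht s with h1 | h1
    · exact absurd (.inr ⟨hx, u, hu, hsep.trans h1⟩) hx2
    · exact .inr ⟨hy, u', hu', hsep'.trans h1⟩
  -- extending traces creates no marginal edge between `X` and `C`
  have hmarg : ∀ t₁ t₂, T.Adj t₁ t₂ → ∀ x ∈ X, x ∈ χ' t₁ → x ∉ χ' t₂ → ∀ y, y ∈ χ t₂ →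
      y ∉ χ t₁ → G.Adj x y → x ∈ χ t₁ := by
    intro t₁ t₂ ht x hx hx1 hx2 y hy2 hy1 hxy
    obtain ⟨-, u, hu, hsep⟩ := hX' _ x hx hx1
    by_contra hxt
    have hsep2 : Separates T t₁ u t₂ := separates_of_adj_of_not_separates h.tree ht hsep
      fun h2 => hx2 (.inr ⟨hx, u, hu, h2⟩)
    obtain ⟨z, hz, hzt⟩ := h.exists_mem_of_separates (D := {x, y})
      (.of_adj hxy (by simp) (by simp)) hu hy2 hsep2
    rcases hz with rfl | rfl
    exacts [hxt hzt, hy1 hzt]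
  refine ⟨τ, T, χ', s, ⟨h.finite, h.tree, hsub, ?_, ?_, ?_, ?_⟩, ?_, ?_⟩
  · intro x hx
    obtain ⟨t, ht⟩ := h.trace_nonempty x trivial
    exact ⟨t, hres t x hx ht⟩
  · intro x a b ha hb
    rcases hsub a ha with hx | hx
    · have key : ∀ c, x ∈ χ' c → WalkJoined T {t | x ∈ χ' t} c s := fun c hc => by
        obtain ⟨-, u, hu, hsep⟩ := hX' c x hx hc
        refine (walkJoined_separates h.tree {u | x ∈ χ u} hu hsep).mono ?_
        rintro t ⟨u', hu', hsep'⟩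
        exact .inr ⟨hx, u', hu', hsep'⟩
      exact (key a ha).trans (key b hb).symm
    · exact (h.trace_joined x a b (hC' a x hx ha) (hC' b x hx hb)).mono
        fun t ht => hres t x (.inr hx) ht
  · intro x hx y hy hxy
    obtain ⟨t₁, t₂, ht, h1, h2⟩ := h.edge x trivial y trivial hxy
    exact ⟨t₁, t₂, ht, h1.imp (hres _ x hx) (hres _ x hx), h2.imp (hres _ y hy) (hres _ y hy)⟩
  · intro t₁ t₂ ht
    refine (h.marginal t₁ t₂ ht).anti fun e he => ?_
    obtain ⟨x, y, rfl, hxy, ⟨hx1, hx2⟩, hy2, hy1⟩ := mem_marginalEdges.1 he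
    have hx2' : x ∉ χ t₂ := fun hh => hx2 (hres _ x (hsub _ hx1) hh)
    have hy1' : y ∉ χ t₁ := fun hh => hy1 (hres _ y (hsub _ hy2) hh)
    refine mem_marginalEdges.2 ⟨x, y, rfl, hxy, ⟨?_, hx2'⟩, ?_, hy1'⟩
    · rcases hsub _ hx1 with hx | hx
      · rcases hsub _ hy2 with hy | hy
        · exact absurd (hnew t₁ t₂ ht x hx hx1 hx2 y hy hy2) hy1
        · exact hmarg t₁ t₂ ht x hx hx1 hx2 y (hC' _ y hy hy2) hy1' hxy
      · exact hC' _ x hx hx1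
    · rcases hsub _ hy2 with hy | hy
      · rcases hsub _ hx1 with hx | hx
        · exact absurd (hnew t₁ t₂ ht x hx hx1 hx2 y hy hy2) hy1
        · exact hmarg t₂ t₁ ht.symm y hy hy2 hy1 x (hC' _ x hx hx1) hx2' hxy.symm
      · exact hC' _ y hy hy2
  · ext x
    constructor
    · rintro (hx | hx)
      · exact absurd hx.2 (Set.disjoint_left.1 hsC hx.1)
      · exact hx.1
    · exact fun hx => .inr (hEs x hx)
  · intro t ht hcov
    -- a bag with more than `k ≥ |X|` vertices is not contained in `X`
    have hmeet : (χ t ∩ C).Nonempty := by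
      by_contra hne
      rw [Set.not_nonempty_iff_eq_empty] at hne
      have : χ' t ⊆ X := by
        rintro x (hx | hx)
        · rw [hne] at hx
          exact hx.elim
        · exact hx.1
      have := Set.ncard_le_ncard this (Set.toFinite _)
      omega
    refine hadm t (ht.trans_le (hcard t)) fun D hD => ?_
    rcases hD with rfl | hD
    · exact hmeet
    · obtain ⟨x, hx | ⟨hxX, u, hxu, hsep⟩, hxD⟩ := hcov D hD
      · exact ⟨x, hx.1, hxD⟩
      · obtain ⟨v, hvs, hvD⟩ := hs D hD
        obtain ⟨y, hyD, hyt⟩ := h.exists_mem_of_separates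
          ((connectedIn_iff.1 (hB D hD)).2 x hxD v hvD) hxu hvs hsep
        exact ⟨y, hyt, hyD⟩

/-! ### Components not extending the bramble, and the induction -/

/-- A component `C` of `G - X` together with `X` is decomposed by the bags `X` and
`(X \ D) ∪ C`, where `D` is a member of `B` not touched by `C`: this bag misses `D`, and the edges
between `C` and `X ∩ D` are the marginal ones. -/
lemma admissibleOn_of_not_touching {V : Type} {G : SimpleGraph V} {k : ℕ} {B : Set (Set V)}
    {X C D : Set V} (hXk : X.ncard ≤ k) (hD : D ∈ B) (ht : ¬ Touching G C D) :
    AdmissibleOn G k B X (X ∪ C) := by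
  have hdis : Disjoint C D := Set.disjoint_iff_inter_eq_empty.2
    (Set.not_nonempty_iff_eq_empty.1 fun h => ht (.inl h))
  have hU : X ∪ C = X ∪ ((X \ D) ∪ C) := by
    rw [← Set.union_assoc, Set.union_eq_self_of_subset_right Set.sdiff_subset]
  rw [hU]
  refine .two_bags ?_ hXk fun _ hcov => ?_
  · intro e he e' he'
    obtain ⟨x, y, rfl, hxy, ⟨hx1, hx2⟩, hy1, hy2⟩ := mem_marginalEdges.1 he
    obtain ⟨x', y', rfl, hxy', ⟨hx1', hx2'⟩, hy1', hy2'⟩ := mem_marginalEdges.1 he'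
    have hxD : x ∈ D := by_contra fun hh => hx2 (.inl ⟨hx1, hh⟩)
    have hxD' : x' ∈ D := by_contra fun hh => hx2' (.inl ⟨hx1', hh⟩)
    have hyC : y ∈ C := hy1.resolve_left fun hh => hy2 hh.1
    have hyC' : y' ∈ C := hy1'.resolve_left fun hh => hy2' hh.1
    by_contra hne
    refine ht (.inr ⟨y, x, y', x', hxy.symm, hxy'.symm, ?_, hyC, hyC', hxD, hxD'⟩)
    rwa [Sym2.eq_swap, Sym2.eq_swap (a := y')]
  · obtain ⟨x, hx | hx, hxD⟩ := hcov D hD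
    · exact hx.2 hxD
    · exact Set.disjoint_left.1 hdis hx hxD

/-- A one-vertex component `{c}` of `G - X` is handled by exchanging `c` with a vertex `a` of `X`,
which leaves at most the marginal edge `ac`. -/
lemma admissibleOn_singleton {V : Type} [Fintype V] {G : SimpleGraph V} {k : ℕ} (hk : 1 ≤ k)
    {B : Set (Set V)} {X : Set V} (hXk : X.ncard ≤ k) (c : V) :
    AdmissibleOn G k B X (X ∪ {c}) := by
  rcases X.eq_empty_or_nonempty with rfl | ⟨a, ha⟩
  · refine .two_bags ?_ hXk fun h => ?_
    · intro e he
      obtain ⟨x, y, -, -, h1, -⟩ := mem_marginalEdges.1 he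
      exact h1.1.elim
    · rw [Set.ncard_singleton] at h
      omega
  · have hU : X ∪ {c} = X ∪ ((X \ {a}) ∪ {c}) := by
      rw [← Set.union_assoc, Set.union_eq_self_of_subset_right Set.sdiff_subset]
    rw [hU]
    refine .two_bags ?_ hXk fun h => ?_
    · have key : ∀ e ∈ marginalEdges G X (X \ {a} ∪ {c}), e = s(a, c) := fun e he => by
        obtain ⟨x, y, rfl, -, ⟨hx1, hx2⟩, hy1, hy2⟩ := mem_marginalEdges.1 he
        have hx : x = a := by_contra fun hh => hx2 (.inl ⟨hx1, hh⟩)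
        have hy : y = c := hy1.resolve_left fun hh => hy2 hh.1
        rw [hx, hy]
      intro e he e' he'
      rw [key e he, key e' he']
    · have h1 := Set.ncard_union_le (X \ {a}) {c}
      have h2 := Set.ncard_sdiff_singleton_add_one ha (Set.toFinite _)
      rw [Set.ncard_singleton] at h1
      omega

lemma Touching.symm {V : Type} {G : SimpleGraph V} {S₁ S₂ : Set V} (h : Touching G S₁ S₂) :
    Touching G S₂ S₁ := by
  rcases h with h | ⟨x₁, x₂, y₁, y₂, h1, h2, h3, h4, h5, h6, h7⟩
  · exact .inl (by rwa [Set.inter_comm])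
  · exact .inr ⟨x₂, x₁, y₂, y₁, h1.symm, h2.symm,
      by rwa [Sym2.eq_swap, Sym2.eq_swap (a := y₂)], h6, h7, h4, h5⟩

/-- If every component of `G - X` can be decomposed together with `X`, so can the whole graph. -/
lemma admissibleOn_univ {V : Type} [Fintype V] {G : SimpleGraph V} {k : ℕ} {B : Set (Set V)}
    {X : Set V} (hXk : X.ncard ≤ k)
    (hcomp : ∀ C : Set V, ConnectedIn G C → Disjoint C X →
      (∀ c ∈ C, ∀ w, w ∉ X → G.Adj c w → w ∈ C) → AdmissibleOn G k B X (X ∪ C)) :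
    AdmissibleOn G k B X Set.univ := by
  have hbase : AdmissibleOn G k B X X := by
    have : AdmissibleOn G k B X (X ∪ X) := by
      refine .two_bags ?_ hXk fun h => absurd h (not_lt.2 hXk)
      intro e he
      obtain ⟨x, y, -, -, h1, -⟩ := mem_marginalEdges.1 he
      exact absurd h1.1 h1.2
    rwa [Set.union_self] at this
  -- take a largest decomposable union of `X` with components of `G - X`
  obtain ⟨H, hH⟩ := (Set.toFinite {H : Set V | AdmissibleOn G k B X H ∧
    ∀ c ∈ H, c ∉ X → ∀ w, w ∉ X → G.Adj c w → w ∈ H}).exists_maximal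
      ⟨X, hbase, fun c hc hc' => absurd hc hc'⟩
  obtain ⟨hadm, hcl⟩ := hH.prop
  by_cases huniv : H = Set.univ
  · rwa [huniv] at hadm
  exfalso
  obtain ⟨v, hv⟩ := (Set.ne_univ_iff_exists_notMem H).1 huniv
  have hXH : X ⊆ H := by
    obtain ⟨τ, T, χ, s, d, rfl, -⟩ := hadm
    exact d.bag_subset s
  have hvX : v ∉ X := fun h => hv (hXH h)
  let C : Set V := {w | WalkJoined G Xᶜ v w}
  have hCX : ∀ c ∈ C, c ∉ X := fun c hc => hc.right_mem
  have hvC : v ∈ C := .refl hvX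
  have hCcl : ∀ c ∈ C, ∀ w, w ∉ X → G.Adj c w → w ∈ C := fun c hc w hw h =>
    WalkJoined.trans hc (.of_adj h (hCX c hc) hw)
  have hHC : ∀ c ∈ C, c ∉ H := by
    intro c hc hcH
    obtain ⟨p, hp⟩ := WalkJoined.symm hc
    have : ∀ {a b : V} (p : G.Walk a b), (∀ z ∈ p.support, z ∈ Xᶜ) → a ∈ H → b ∈ H := by
      intro a b p
      induction p with
      | nil => exact fun _ h => h
      | cons hab p ih =>
        intro hp ha
        exact ih (fun z hz => hp z (by simp [hz]))
          (hcl _ ha (hp _ (by simp)) _ (hp _ (by simp)) hab)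
    exact hv (this p hp hcH)
  have hCconn : ConnectedIn G C := by
    refine connectedIn_iff.2 ⟨⟨v, hvC⟩, ?_⟩
    classical
    have key : ∀ a ∈ C, WalkJoined G C v a := by
      rintro a ⟨p, hp⟩
      exact ⟨p, fun z hz => ⟨p.takeUntil z hz, fun y hy =>
        hp y (p.support_takeUntil_subset_support hz hy)⟩⟩
    exact fun a ha b hb => (key a ha).symm.trans (key b hb)
  have hnew := hadm.glue (hcomp C hCconn (Set.disjoint_left.2 hCX) hCcl) (by
      rintro x ⟨hxH, hx | hx⟩
      exacts [hx, absurd hxH (hHC x hx)]) (by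
      rintro x hx hxX y (hy | hy) hyX hxy
      exacts [hyX hy, hHC y hy (hcl x hx hxX y hyX hxy)])
  have hle := hH.le_of_ge (y := H ∪ (X ∪ C)) ⟨hnew, by
    rintro c (hc | hc | hc) hcX w hw hcw
    · exact .inl (hcl c hc hcX w hw hcw)
    · exact absurd hc hcX
    · exact .inr (.inr (hCcl c hc w hw hcw))⟩ Set.subset_union_left
  exact hv (hle (.inr (.inr hvC)))

/-- If `G` has no tight bramble of order larger than `k`, then for every
tight bramble `B` of `G` there exists a `B`-admissible loose tree-decomposition of
`G`. -/
theorem admissible_ltd_exists {V : Type} [Fintype V] (G : SimpleGraph V) (k : ℕ)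
    (hk : 1 ≤ k)
    (hmax : ∀ B' : Set (Set V), TightBramble G B' → brambleOrder B' ≤ k) :
    ∀ B : Set (Set V), TightBramble G B →
      ∃ (τ : Type) (T : SimpleGraph τ) (χ : τ → Set V), IsLTD G T χ ∧
        ∀ t, k < (χ t).ncard → ¬ IsCover B (χ t) := by
  intro B
  -- downward induction: the claim is assumed for all tight brambles strictly containing `B`
  induction B using WellFoundedGT.induction with
  | ind B ih =>
  intro hB
  obtain ⟨hconn, hcard, htouch⟩ := hB
  have hne : {n | ∃ S : Set V, IsCover B S ∧ S.ncard = n}.Nonempty := by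
    refine ⟨_, Set.univ, fun D hD => ?_, rfl⟩
    rw [Set.univ_inter]
    exact (connectedIn_iff.1 (hconn D hD)).1
  obtain ⟨X, hX, hXcard⟩ := Nat.sInf_mem hne
  have hXk : X.ncard ≤ k := hXcard.trans_le (hmax B ⟨hconn, hcard, htouch⟩)
  have hmin : ∀ Y, IsCover B Y → X.ncard ≤ Y.ncard := fun Y hY =>
    hXcard.trans_le (Nat.sInf_le ⟨Y, hY, rfl⟩)
  by_contra hno
  have huniv : AdmissibleOn G k B X Set.univ := by
    refine admissibleOn_univ hXk fun C hC hCX hcl => ?_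
    by_cases hC2 : C.ncard < 2
    · obtain ⟨c, hc⟩ := (connectedIn_iff.1 hC).1
      have : C = {c} := by
        have h1 : C.ncard ≤ 1 := by omega
        rw [Set.ncard_le_one_iff_subsingleton] at h1
        exact h1.eq_singleton_of_mem hc
      rw [this]
      exact admissibleOn_singleton hk hXk c
    by_cases hCt : ∃ D ∈ B, ¬ Touching G C D
    · obtain ⟨D, hD, ht⟩ := hCt
      exact admissibleOn_of_not_touching hXk hD ht
    push Not at hCt
    have hCB : C ∉ B := fun hCB => by
      obtain ⟨x, hx, hx'⟩ := hX C hCB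
      exact Set.disjoint_left.1 hCX hx' hx
    have hB' : TightBramble G (insert C B) := by
      refine ⟨?_, ?_, htouch.insert fun D hD _ => ⟨hCt D hD, (hCt D hD).symm⟩⟩
      · rintro S (rfl | hS)
        exacts [hC, hconn S hS]
      · rintro S (rfl | hS)
        exacts [by omega, hcard S hS]
    obtain ⟨τ, T, χ, hd, hadm⟩ := ih (insert C B) (Set.ssubset_insert hCB) hB'
    have hbad : ∃ s, k < (χ s).ncard ∧ IsCover B (χ s) := by
      by_contra hh
      push Not at hh
      exact hno ⟨τ, T, χ, hd, hh⟩
    obtain ⟨s, hsk, hs⟩ := hbad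
    have hsC : Disjoint (χ s) C := by
      rw [Set.disjoint_iff_inter_eq_empty, ← Set.not_nonempty_iff_eq_empty]
      intro hsC
      refine hadm s hsk ?_
      rintro D (rfl | hD)
      exacts [hsC, hs D hD]
    exact admissibleOn_of_reroute hconn hX hmin hXk hCX hcl (isLTDOn_univ_iff.2 hd) hadm hs hsC
  obtain ⟨τ, T, χ, -, hd, -, hadm⟩ := huniv
  exact hno ⟨τ, T, χ, isLTDOn_univ_iff.1 hd, hadm⟩
end

section
/- Let G be a finite simple graph and k ≥ 1 an integer. If G has a tight bramble of order at least k, then avms(G) ≥ k, i.e. no winning mixed search strategy against an agile and visible fugitive on G has cost less than k. -/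
/-!
The fugitive escapes by always sitting on an edge inside a bramble element that contains no
searcher. With fewer than `k` searchers no position covers the bramble `B`, so before and after
each move `S → S'` there are `B₀, B₁ ∈ B` with `B₀ ∩ S = ∅` and `B₁ ∩ S' = ∅`. Delete from `G` the
vertices of `S ∩ S'` and the edge slid along, if any (`moveGraph`). Both `G[B₀]` and `G[B₁]` survive:
a slide starts in `S` and ends in `S'`, so its edge lies inside neither set. Tightness of the bramble
says that `B₀` and `B₁` either meet or are joined by two edges, of which at most one is the slid one;
hence the fugitive can run from any edge inside `B₀` to any edge inside `B₁` along an avoiding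
pathway (`exists_mem_fsp`).

Since `avms` is an infimum of naturals, the bound on it also needs some winning strategy of finite
cost to exist: occupying the vertices one after another wins, because every edge that stays
accessible has an unoccupied endpoint.
-/

open SimpleGraph

/-- Legitimate searchers' moves: placement, removal, or sliding along an edge. -/
def LegitMove {V : Type} [DecidableEq V] (G : SimpleGraph V) (S S' : Finset V) : Prop :=
  (∃ x, x ∉ S ∧ S' = insert x S) ∨
  (∃ x, x ∈ S ∧ S' = S.erase x) ∨
  (∃ x y, G.Adj x y ∧ x ∈ S ∧ y ∉ S ∧ S' = insert y (S.erase x))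

/-- The set of edges immediately cleared by the move `(S, S')`. -/
def clearEdges {V : Type} [DecidableEq V] (G : SimpleGraph V) (S S' : Finset V) :
    Set (Sym2 V) :=
  {e | ∃ y, S' \ S = {y} ∧ ∃ z ∈ S, e = s(z, y) ∧ e ∈ G.edgeSet}

/-- A pathway: a sequence of edges in which consecutive edges are distinct and share a
vertex. -/
def IsPathway {V : Type} (G : SimpleGraph V) (w : List (Sym2 V)) : Prop :=
  (∀ e ∈ w, e ∈ G.edgeSet) ∧
  w.Chain' (fun e f => e ≠ f ∧ ∃ v, v ∈ e ∧ v ∈ f)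

/-- `(S, S')` is a slide along the edge `xy`, from `x` to `y`. -/
def SlideAlong {V : Type} [DecidableEq V] (G : SimpleGraph V) (S S' : Finset V)
    (x y : V) : Prop :=
  G.Adj x y ∧ x ∈ S ∧ x ∉ S' ∧ y ∉ S ∧ y ∈ S'

/-- An `(S, S')`-avoiding pathway. -/
def AvoidingPathway {V : Type} [DecidableEq V] (G : SimpleGraph V) (S S' : Finset V)
    (w : List (Sym2 V)) : Prop :=
  2 ≤ w.length ∧ IsPathway G w ∧
  w.Chain' (fun e f => ∀ v, v ∈ e → v ∈ f → ¬(v ∈ S ∧ v ∈ S')) ∧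
  (∀ x y, SlideAlong G S S' x y →
    (∀ i : Fin w.length, w.get i = s(x, y) → (i : ℕ) = 0 ∨ (i : ℕ) = w.length - 1) ∧
    (w.head? = some s(x, y) ∧ w.getLast? = some s(x, y) → 2 < w.length))

/-- Edges accessible from `e` through an `(S, S')`-avoiding pathway, not having both
endpoints in `S'`. -/
def Accessible {V : Type} [DecidableEq V] (G : SimpleGraph V) (S : Finset V)
    (e : Sym2 V) (S' : Finset V) : Set (Sym2 V) :=
  {e' | ¬(∀ v ∈ e', v ∈ S') ∧
    ∃ w : List (Sym2 V), AvoidingPathway G S S' w ∧ w.head? = some e ∧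
      w.getLast? = some e'}

/-- The fugitive space. -/
def fsp {V : Type} [DecidableEq V] (G : SimpleGraph V) (S : Finset V) (e : Sym2 V)
    (S' : Finset V) : Set (Sym2 V) :=
  ({e} \ clearEdges G S S') ∪ Accessible G S e S'

/-- A (mixed) search strategy on `G`. -/
structure SearchStrategy {V : Type} [DecidableEq V] (G : SimpleGraph V) where
  move : Finset V → Sym2 V → Finset V
  legit : ∀ S e, LegitMove G S (move S e)

/-- A fugitive strategy on `G`: an initial edge together with a next-location function
that stays in the fugitive space whenever it is nonempty (`none` encodes capture `⋆`). -/
structure FugitiveStrategy {V : Type} [DecidableEq V] (G : SimpleGraph V) where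
  start : Sym2 V
  start_mem : start ∈ G.edgeSet
  next : Finset V → Sym2 V → Finset V → Option (Sym2 V)
  next_mem : ∀ S e S' e', next S e S' = some e' → e' ∈ fsp G S e S'
  next_isSome : ∀ S e S', (fsp G S e S').Nonempty → next S e S' ≠ none

/-- The play generated by a search program: `playState s f i = (Sᵢ, some eᵢ₊₁)`, with
`none` once the fugitive has been captured (after which the play is frozen). -/
def playState {V : Type} [DecidableEq V] {G : SimpleGraph V} (s : SearchStrategy G)
    (f : FugitiveStrategy G) : ℕ → Finset V × Option (Sym2 V)
  | 0 => (∅, some f.start)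
  | n + 1 =>
      match playState s f n with
      | (S, some e) => (s.move S e, f.next S e (s.move S e))
      | (S, none) => (S, none)

/-- A search strategy is winning if every generated play is finite (the fugitive is
eventually captured). -/
def Winning {V : Type} [DecidableEq V] {G : SimpleGraph V} (s : SearchStrategy G) : Prop :=
  ∀ f : FugitiveStrategy G, ∃ n, (playState s f n).2 = none

/-- The cost of the strategy `s` is at most `k`. -/
def CostLE {V : Type} [DecidableEq V] {G : SimpleGraph V} (s : SearchStrategy G)
    (k : ℕ) : Prop :=
  ∀ (f : FugitiveStrategy G) (n : ℕ), ((playState s f n).1).card ≤ k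

/-- A search strategy is monotone: in every generated play, the fugitive location was
never cleared at an earlier step. -/
def MonotoneStrategy {V : Type} [DecidableEq V] {G : SimpleGraph V}
    (s : SearchStrategy G) : Prop :=
  ∀ (f : FugitiveStrategy G) (n : ℕ) (e : Sym2 V), (playState s f n).2 = some e →
    ∀ j, 1 ≤ j → j ≤ n + 1 →
      e ∉ clearEdges G ((playState s f (j - 1)).1) ((playState s f j).1)

/-- The mixed search number against an agile and visible fugitive. -/
noncomputable def avms {V : Type} [DecidableEq V] (G : SimpleGraph V) : ℕ :=
  sInf {k | ∃ s : SearchStrategy G, Winning s ∧ CostLE s k}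

/-- The monotone mixed search number against an agile and visible fugitive. -/
noncomputable def mavms {V : Type} [DecidableEq V] (G : SimpleGraph V) : ℕ :=
  sInf {k | ∃ s : SearchStrategy G, Winning s ∧ MonotoneStrategy s ∧ CostLE s k}

/-! ### Avoiding pathways as walks in a subgraph -/

/-- The graph in which the fugitive may run during the move `(S, S')`: vertices occupied throughout
the move, and edges along which the move slides, are forbidden. -/
def moveGraph {V : Type} [DecidableEq V] (G : SimpleGraph V) (S S' : Finset V) :
    SimpleGraph V where
  Adj u v := G.Adj u v ∧ ¬(u ∈ S ∧ u ∈ S') ∧ ¬(v ∈ S ∧ v ∈ S') ∧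
    ¬SlideAlong G S S' u v ∧ ¬SlideAlong G S S' v u
  symm := ⟨fun _ _ h => ⟨h.1.symm, h.2.2.1, h.2.1, h.2.2.2.2, h.2.2.2.1⟩⟩
  loopless := ⟨fun _ h => h.1.ne rfl⟩

/-- One step of a pathway inside the graph `H`. -/
def PathStep {V : Type} (H : SimpleGraph V) (e f : Sym2 V) : Prop :=
  e ∈ H.edgeSet ∧ f ∈ H.edgeSet ∧ e ≠ f ∧ ∃ v, v ∈ e ∧ v ∈ f

/-- The edge `e` lies inside a member of `B` that contains no searcher of the position `S`. -/
def SafeEdge {V : Type} (G : SimpleGraph V) (B : Set (Set V)) (S : Finset V)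
    (e : Sym2 V) : Prop :=
  e ∈ G.edgeSet ∧ ∃ B0 ∈ B, (∀ v ∈ e, v ∈ B0) ∧ ∀ v ∈ S, v ∉ B0

lemma reflTransGen_pathStep {V : Type} {H : SimpleGraph V} {u v : V} (p : H.Walk u v) :
    ∀ {e e' : Sym2 V}, e ∈ H.edgeSet → e' ∈ H.edgeSet → u ∈ e → v ∈ e' →
      Relation.ReflTransGen (PathStep H) e e' := by
  have step : ∀ {e f : Sym2 V} {a : V}, e ∈ H.edgeSet → f ∈ H.edgeSet → a ∈ e → a ∈ f →
      Relation.ReflTransGen (PathStep H) e f := by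
    intro e f a he hf hae haf
    by_cases hef : e = f
    · exact hef ▸ Relation.ReflTransGen.refl
    · exact Relation.ReflTransGen.single ⟨he, hf, hef, a, hae, haf⟩
  induction p with
  | nil => exact fun he he' hu hv => step he he' hu hv
  | @cons a b c hab p ih =>
    intro e e' he he' hu hv
    have hm : s(a, b) ∈ H.edgeSet := hab
    exact (step he hm hu (Sym2.mem_mk_left a b)).trans (ih hm he' (Sym2.mem_mk_right a b) hv)

lemma slideAlong_unique {V : Type} [DecidableEq V] {G : SimpleGraph V} {S S' : Finset V}
    (hl : LegitMove G S S') {x y x' y' : V} (h : SlideAlong G S S' x y)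
    (h' : SlideAlong G S S' x' y') : x = x' ∧ y = y' := by
  obtain ⟨-, hx, hxS, hy, hyS⟩ := h
  obtain ⟨-, hx', hxS', hy', hyS'⟩ := h'
  rcases hl with ⟨a, ha, rfl⟩ | ⟨a, ha, rfl⟩ | ⟨a, b, hab, ha, hb, rfl⟩ <;>
    simp only [Finset.mem_insert, Finset.mem_erase] at * <;> grind

/-- The induced graph on `B0` survives in `moveGraph` if `B0` avoids one of the two positions, so
its vertices stay mutually reachable. -/
lemma reachable_moveGraph {V : Type} [DecidableEq V] {G : SimpleGraph V} {S S' : Finset V}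
    {B0 : Set V} (hc : ConnectedIn G B0)
    (hB : (∀ v ∈ S, v ∉ B0) ∨ (∀ v ∈ S', v ∉ B0)) {u v : V} (hu : u ∈ B0) (hv : v ∈ B0) :
    (moveGraph G S S').Reachable u v := by
  have hadj : ∀ a b : B0, (G.induce B0).Adj a b → (moveGraph G S S').Adj a b := by
    intro a b hab
    have h1 : G.Adj a b := hab
    have ha := a.2
    have hb := b.2
    simp only [moveGraph, SlideAlong]
    grind
  let φ : G.induce B0 →g moveGraph G S S' := ⟨Subtype.val, fun {a b} h => hadj a b h⟩
  exact (hc.preconnected ⟨u, hu⟩ ⟨v, hv⟩).map φ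

lemma mem_edgeSet_moveGraph {V : Type} [DecidableEq V] {G : SimpleGraph V} {S S' : Finset V}
    {B0 : Set V} (hB : (∀ v ∈ S, v ∉ B0) ∨ (∀ v ∈ S', v ∉ B0)) {e : Sym2 V}
    (he : e ∈ G.edgeSet) (heB : ∀ v ∈ e, v ∈ B0) : e ∈ (moveGraph G S S').edgeSet := by
  induction e using Sym2.ind with
  | _ a b =>
    have h1 : G.Adj a b := he
    have ha := heB a (Sym2.mem_mk_left a b)
    have hb := heB b (Sym2.mem_mk_right a b)
    change (moveGraph G S S').Adj a b
    simp only [moveGraph, SlideAlong]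
    grind

lemma exists_edge {V : Type} [Finite V] {G : SimpleGraph V} {B0 : Set V}
    (hc : ConnectedIn G B0) (h2 : 2 ≤ B0.ncard) : ∃ e ∈ G.edgeSet, ∀ v ∈ e, v ∈ B0 := by
  obtain ⟨a, ha, b, hb, hab⟩ := Set.one_lt_ncard_iff_nontrivial.1 h2
  obtain ⟨p⟩ := hc.preconnected ⟨a, ha⟩ ⟨b, hb⟩
  cases p with
  | nil => exact absurd rfl hab
  | @cons _ c _ h _ =>
    refine ⟨s(a, c), h, ?_⟩
    intro v hv
    rcases Sym2.mem_iff.1 hv with rfl | rfl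
    · exact ha
    · exact c.2

lemma mem_accessible {V : Type} [DecidableEq V] {G : SimpleGraph V} {S S' : Finset V}
    {e e' : Sym2 V} (hne : e ≠ e') (hS' : ¬∀ v ∈ e', v ∈ S')
    (h : Relation.ReflTransGen (PathStep (moveGraph G S S')) e e') :
    e' ∈ Accessible G S e S' := by
  obtain ⟨l, hl, hlast⟩ := List.exists_isChain_cons_of_relationReflTransGen h
  have hl0 : l ≠ [] := by
    rintro rfl
    exact hne hlast
  obtain ⟨f, l', rfl⟩ := List.exists_cons_of_ne_nil hl0
  have hmem : ∀ g ∈ e :: f :: l', g ∈ (moveGraph G S S').edgeSet := by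
    clear hlast hne hl0 h
    generalize hL : f :: l' = L at hl
    have hL0 : L ≠ [] := by simp [← hL]
    clear hL
    induction L generalizing e with
    | nil => exact absurd rfl hL0
    | cons g L ih =>
      rw [List.isChain_cons_cons] at hl
      intro x hx
      rcases List.mem_cons.1 hx with rfl | hx
      · exact hl.1.1
      · cases L with
        | nil =>
          rw [List.mem_singleton] at hx
          exact hx ▸ hl.1.2.1
        | cons _ _ => exact ih hl.2 (by simp) x hx
  have hsub : ∀ g ∈ (moveGraph G S S').edgeSet, g ∈ G.edgeSet := by
    intro g
    induction g using Sym2.ind with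
    | _ a b => exact fun h => h.1
  have hfree : ∀ g ∈ (moveGraph G S S').edgeSet, ∀ v ∈ g, ¬(v ∈ S ∧ v ∈ S') := by
    intro g
    induction g using Sym2.ind with
    | _ a b =>
      intro h v hv
      rcases Sym2.mem_iff.1 hv with rfl | rfl
      · exact h.2.1
      · exact h.2.2.1
  have hslide : ∀ x y, SlideAlong G S S' x y → s(x, y) ∉ e :: f :: l' := by
    intro x y hxy hm
    exact (hmem _ hm).2.2.2.1 hxy
  refine ⟨hS', e :: f :: l', ⟨by simp, ⟨fun g hg => hsub g (hmem g hg), ?_⟩, ?_, ?_⟩, rfl, ?_⟩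
  · exact hl.imp fun _ _ h => ⟨h.2.2.1, h.2.2.2⟩
  · exact hl.imp fun a _ h v hv _ => hfree a h.1 v hv
  · intro x y hxy
    refine ⟨fun i hi => ?_, fun hh => ?_⟩
    · exact absurd (hi ▸ List.get_mem _ i) (hslide x y hxy)
    · exact absurd (List.mem_of_head? hh.1) (hslide x y hxy)
  · rw [List.getLast?_eq_some_getLast (by simp), hlast]

/-! ### Escape from a single move -/

/-- A fugitive on an edge that is safe for `S` can answer the move `(S, S')` by going to an edge
that is safe for `S'`, as long as `S'` does not cover the bramble. -/
lemma exists_mem_fsp {V : Type} [Finite V] [DecidableEq V] {G : SimpleGraph V}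
    {B : Set (Set V)} (hB : TightBramble G B) {S S' : Finset V} (hl : LegitMove G S S')
    {e : Sym2 V} (he : SafeEdge G B S e) (hS' : ¬IsCover B (S' : Set V)) :
    ∃ e' ∈ fsp G S e S', SafeEdge G B S' e' := by
  obtain ⟨heG, B0, hB0, heB0, hSB0⟩ := he
  obtain ⟨B1, hB1, hd⟩ : ∃ B1 ∈ B, ∀ v ∈ S', v ∉ B1 := by
    simp only [IsCover, not_forall] at hS'
    obtain ⟨B1, hB1, hd⟩ := hS'
    exact ⟨B1, hB1, fun v hv hv1 => hd ⟨v, hv, hv1⟩⟩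
  obtain ⟨e', heG', heB1⟩ := exists_edge (hB.1 B1 hB1) (hB.2.1 B1 hB1)
  refine ⟨e', ?_, heG', B1, hB1, heB1, hd⟩
  by_cases hee : e = e'
  · subst hee
    -- A cleared edge has an endpoint in `S`, whereas `e` lies inside `B0`.
    refine Or.inl ⟨rfl, ?_⟩
    rintro ⟨y, -, z, hz, rfl, -⟩
    exact hSB0 z hz (heB0 z (Sym2.mem_mk_left z y))
  · right
    have hu := e.out_fst_mem
    have hv := e'.out_fst_mem
    have htouch : Touching G B0 B1 := by
      by_cases h01 : B0 = B1
      · subst h01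
        exact Or.inl ⟨e.out.1, heB0 _ hu, heB0 _ hu⟩
      · exact hB.2.2 hB0 hB1 h01
    have hr0 : ∀ {a b}, a ∈ B0 → b ∈ B0 → (moveGraph G S S').Reachable a b :=
      reachable_moveGraph (hB.1 B0 hB0) (Or.inl hSB0)
    have hr1 : ∀ {a b}, a ∈ B1 → b ∈ B1 → (moveGraph G S S').Reachable a b :=
      reachable_moveGraph (hB.1 B1 hB1) (Or.inr hd)
    have hreach : (moveGraph G S S').Reachable e.out.1 e'.out.1 := by
      rcases htouch with ⟨c, hc0, hc1⟩ | ⟨x1, x2, y1, y2, hx, hy, hxy, hx1, hy1, hx2, hy2⟩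
      · exact (hr0 (heB0 _ hu) hc0).trans (hr1 hc1 (heB1 _ hv))
      · -- At most one of the two connecting edges is slid along, so the other survives: its
        -- endpoints lie in `B0` and `B1`, hence are not occupied throughout.
        have hfree : (moveGraph G S S').Adj x1 x2 ∨ (moveGraph G S S').Adj y1 y2 := by
          have hfree' : ∀ {a b}, G.Adj a b → a ∈ B0 → b ∈ B1 →
              ¬(moveGraph G S S').Adj a b → SlideAlong G S S' b a := by
            intro a b hab ha hb hn
            by_contra hs
            refine hn ⟨hab, fun h => hSB0 a h.1 ha, fun h => hd b h.2 hb, ?_, hs⟩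
            exact fun h => hSB0 a h.2.1 ha
          by_contra! hn
          have h := slideAlong_unique hl (hfree' hx hx1 hx2 hn.1) (hfree' hy hy1 hy2 hn.2)
          exact hxy (by rw [h.1, h.2])
        rcases hfree with h | h
        · exact ((hr0 (heB0 _ hu) hx1).trans h.reachable).trans (hr1 hx2 (heB1 _ hv))
        · exact ((hr0 (heB0 _ hu) hy1).trans h.reachable).trans (hr1 hy2 (heB1 _ hv))
    obtain ⟨p⟩ := hreach
    refine mem_accessible hee (fun h => hd _ (h _ hv) (heB1 _ hv)) ?_
    exact reflTransGen_pathStep p (mem_edgeSet_moveGraph (Or.inl hSB0) heG heB0)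
      (mem_edgeSet_moveGraph (Or.inr hd) heG' heB1) hu hv

/-! ### The escaping fugitive strategy -/

open Classical in
/-- The fugitive strategy that moves to an accessible edge satisfying `P S'` whenever there is
one. -/
noncomputable def greedyFugitive {V : Type} [DecidableEq V] (G : SimpleGraph V)
    (P : Finset V → Sym2 V → Prop) (e0 : Sym2 V) (h0 : e0 ∈ G.edgeSet) : FugitiveStrategy G where
  start := e0
  start_mem := h0
  next S e S' :=
    if h : ∃ e' ∈ fsp G S e S', P S' e' then some h.choose
    else if h' : (fsp G S e S').Nonempty then some h'.some else none
  next_mem := by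
    intro S e S' e' h
    split_ifs at h with h1 h2
    · exact Option.some.inj h ▸ h1.choose_spec.1
    · exact Option.some.inj h ▸ h2.some_mem
  next_isSome := by
    intro S e S' h
    split_ifs <;> simp

lemma greedyFugitive_next {V : Type} [DecidableEq V] (G : SimpleGraph V)
    (P : Finset V → Sym2 V → Prop) (e0 : Sym2 V) (h0 : e0 ∈ G.edgeSet) {S S' : Finset V}
    {e : Sym2 V} (h : ∃ e' ∈ fsp G S e S', P S' e') :
    ∃ e', (greedyFugitive G P e0 h0).next S e S' = some e' ∧ P S' e' :=
  ⟨h.choose, dif_pos h, h.choose_spec.2⟩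

lemma not_isCover {V : Type} {B : Set (Set V)} {k : ℕ} (hk : k ≤ brambleOrder B)
    {S : Finset V} (hS : S.card < k) : ¬IsCover B (S : Set V) := fun h => by
  have : brambleOrder B ≤ S.card := Nat.sInf_le ⟨S, h, Set.ncard_coe_finset S⟩
  omega

lemma le_cost {V : Type} [Finite V] [DecidableEq V] {G : SimpleGraph V} {k : ℕ} (hk : 1 ≤ k)
    {B : Set (Set V)} (hB : TightBramble G B) (hkB : k ≤ brambleOrder B)
    (s : SearchStrategy G) (hw : Winning s) (m : ℕ) (hm : CostLE s m) : k ≤ m := by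
  by_contra! hlt
  obtain ⟨B0, hB0⟩ : B.Nonempty := by
    by_contra! hne
    exact not_isCover (S := ∅) hkB (by rwa [Finset.card_empty]) (by simp [IsCover, hne])
  obtain ⟨e0, he0, heB0⟩ := exists_edge (hB.1 B0 hB0) (hB.2.1 B0 hB0)
  let f := greedyFugitive G (SafeEdge G B) e0 he0
  have hinv : ∀ n, ∃ e, (playState s f n).2 = some e ∧ SafeEdge G B (playState s f n).1 e := by
    intro n
    induction n with
    | zero => exact ⟨e0, rfl, he0, B0, hB0, heB0, by simp [playState]⟩
    | succ n ih =>
      obtain ⟨e, he, hsafe⟩ := ih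
      have hc := hm f (n + 1)
      obtain ⟨S, hS⟩ : ∃ S, playState s f n = (S, some e) := ⟨_, Prod.ext rfl he⟩
      have hstep : playState s f (n + 1) = (s.move S e, f.next S e (s.move S e)) := by
        simp only [playState, hS]
      rw [hstep] at hc ⊢
      rw [hS] at hsafe
      exact greedyFugitive_next G _ e0 he0
        (exists_mem_fsp hB (s.legit S e) hsafe (not_isCover hkB (lt_of_le_of_lt hc hlt)))
  obtain ⟨n, hn⟩ := hw f
  obtain ⟨e, he, -⟩ := hinv n
  simp [hn] at he

/-! ### A winning strategy of finite cost -/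

open Classical in
/-- Occupy a further vertex as long as there is one; a removal serves as the move once all vertices
are occupied. -/
noncomputable def fillStrategy {V : Type} [DecidableEq V] (G : SimpleGraph V) [Nonempty V] :
    SearchStrategy G where
  move S _ := if h : ∃ x, x ∉ S then insert h.choose S else S.erase (Classical.arbitrary V)
  legit S e := by
    split_ifs with h
    · exact Or.inl ⟨_, h.choose_spec, rfl⟩
    · push Not at h
      exact Or.inr (Or.inl ⟨_, h _, rfl⟩)

/-- After a placement every edge of the fugitive space has an unoccupied endpoint. -/
lemma unoccupied_of_mem_fsp {V : Type} [DecidableEq V] {G : SimpleGraph V} {S : Finset V}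
    {x : V} (hx : x ∉ S) {e e' : Sym2 V} (he : e ∈ G.edgeSet) (hfree : ¬∀ v ∈ e, v ∈ S)
    (he' : e' ∈ fsp G S e (insert x S)) : e' ∈ G.edgeSet ∧ ¬∀ v ∈ e', v ∈ insert x S := by
  rcases he' with ⟨rfl, hcl⟩ | ⟨hn, w, hw, -, hlast⟩
  · refine ⟨he, fun hall => hcl ?_⟩
    have hdiff : insert x S \ S = {x} := by
      ext v
      simp only [Finset.mem_sdiff, Finset.mem_insert, Finset.mem_singleton]
      grind
    induction e' using Sym2.ind with
    | _ a b =>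
      have hab : a ≠ b := G.ne_of_adj he
      simp only [Sym2.mem_iff, forall_eq_or_imp, forall_eq, Finset.mem_insert] at hall hfree
      by_cases ha : a = x
      · subst ha
        exact ⟨a, hdiff, b, by grind, Sym2.eq_swap, he⟩
      · exact ⟨x, hdiff, a, by grind, by grind, he⟩
  · exact ⟨hw.2.1.1 _ (List.mem_of_getLast? hlast), hn⟩

lemma winning_fillStrategy {V : Type} [Fintype V] [DecidableEq V] (G : SimpleGraph V)
    [Nonempty V] : Winning (fillStrategy G) := by
  intro f
  by_contra! hno
  have hinv : ∀ n, ∃ e, (playState (fillStrategy G) f n).2 = some e ∧ e ∈ G.edgeSet ∧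
      (¬∀ v ∈ e, v ∈ (playState (fillStrategy G) f n).1) ∧
      n ≤ (playState (fillStrategy G) f n).1.card := by
    intro n
    induction n with
    | zero =>
      refine ⟨f.start, rfl, f.start_mem, fun h => ?_, by simp⟩
      exact absurd (h _ f.start.out_fst_mem) (by simp [playState])
    | succ n ih =>
      obtain ⟨e, he, heG, hfree, hcard⟩ := ih
      obtain ⟨S, hS⟩ : ∃ S, playState (fillStrategy G) f n = (S, some e) := ⟨_, Prod.ext rfl he⟩
      have hstep : playState (fillStrategy G) f (n + 1) =
          ((fillStrategy G).move S e, f.next S e ((fillStrategy G).move S e)) := by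
        simp only [playState, hS]
      have hne := hno (n + 1)
      rw [hstep] at hne ⊢
      rw [hS] at hfree hcard
      have hx : ∃ x, x ∉ S := by
        push Not at hfree
        exact hfree.imp fun _ h => h.2
      have hmove : (fillStrategy G).move S e = insert hx.choose S := dif_pos hx
      rw [hmove] at hne ⊢
      obtain ⟨e', he'⟩ := Option.ne_none_iff_exists'.1 hne
      obtain ⟨h1, h2⟩ := unoccupied_of_mem_fsp hx.choose_spec heG hfree (f.next_mem _ _ _ _ he')
      refine ⟨e', he', h1, h2, ?_⟩
      rw [Finset.card_insert_of_notMem hx.choose_spec]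
      simpa using hcard
  obtain ⟨_, -, -, -, h⟩ := hinv (Fintype.card V + 1)
  exact absurd (h.trans (Finset.card_le_univ _)) (by omega)

/-- If `G` has a tight bramble of order at least `k`, then `avms G ≥ k`:
no winning mixed search strategy against an agile and visible fugitive has cost less
than `k`. -/
theorem bramble_escape {V : Type} [Fintype V] [DecidableEq V] (G : SimpleGraph V)
    (k : ℕ) (hk : 1 ≤ k)
    (h : ∃ B : Set (Set V), TightBramble G B ∧ k ≤ brambleOrder B) :
    k ≤ avms G ∧
    ∀ s : SearchStrategy G, Winning s → ∀ m, CostLE s m → k ≤ m := by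
  obtain ⟨B, hB, hkB⟩ := h
  have key := le_cost hk hB hkB
  refine ⟨?_, key⟩
  have : Nonempty V := by
    by_contra! hV
    refine not_isCover (S := ∅) hkB (by rwa [Finset.card_empty]) fun B0 hB0 => ?_
    obtain ⟨v⟩ := (hB.1 B0 hB0).nonempty
    exact isEmptyElim v.1
  -- The set of costs has to be nonempty: otherwise `avms G` would be the junk value `0`.
  refine le_csInf ⟨Fintype.card V, fillStrategy G, winning_fillStrategy G,
    fun _ _ => Finset.card_le_univ _⟩ ?_
  rintro m ⟨s, hw, hm⟩
  exact key s hw m hm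
end
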